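/- arXiv:1110.5373 — 7 statements merged into one kernel-verified Lean document; each statement's English description precedes it below -/
import Mathlib

section
/- Let A be a d×d self-adjoint (Hermitian) matrix and B a rank-one negative semidefinite self-adjoint d×d matrix. Then for every n, λ_{n−1}(A−B) ≤ λ_n(A) (for n ≥ 2) and λ_n(A) ≤ λ_n(A−B). Moreover, both inequalities are strict if and only if λ_n(A) is a simple eigenvalue of A and its eigenvector is not in the null-space of B. -/
open Matrix

/-- The eigenvalues of a Hermitian matrix, sorted in increasing order and counted with
multiplicity (junk value `0` if the matrix is not Hermitian). -/
noncomputable def sortedEigs {𝕜 : Type*} [RCLike 𝕜] {d : ℕ} (M : Matrix (Fin d) (Fin d) 𝕜) :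
    Fin d → ℝ :=
  if h : M.IsHermitian then h.eigenvalues ∘ Tuple.sort h.eigenvalues else 0

namespace RankOneInterlacing

theorem exists_basis {d : ℕ} (M : Matrix (Fin d) (Fin d) ℂ) (hM : M.IsHermitian) :
    Monotone (sortedEigs M) ∧
    ∃ b : OrthonormalBasis (Fin d) ℂ (EuclideanSpace ℂ (Fin d)),
      ∀ i, Matrix.toEuclideanLin M (b i) = ((sortedEigs M i : ℝ) : ℂ) • b i := by
  have hs : sortedEigs M = hM.eigenvalues ∘ Tuple.sort hM.eigenvalues := by
    simp [sortedEigs, hM]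
  rw [hs]
  refine ⟨Tuple.monotone_sort _,
    hM.eigenvectorBasis.reindex (Tuple.sort hM.eigenvalues).symm, fun i => ?_⟩
  have := hM.mulVec_eigenvectorBasis (Tuple.sort hM.eigenvalues i)
  ext j
  have := congrFun this j
  simpa [Matrix.toLpLin_apply] using this

theorem inner_basis {d : ℕ} {M : Matrix (Fin d) (Fin d) ℂ} (hM : M.IsHermitian)
    {b : OrthonormalBasis (Fin d) ℂ (EuclideanSpace ℂ (Fin d))} {l : Fin d → ℝ}
    (hb : ∀ i, Matrix.toEuclideanLin M (b i) = ((l i : ℝ) : ℂ) • b i)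
    (v : EuclideanSpace ℂ (Fin d)) (i : Fin d) :
    inner ℂ (b i) (Matrix.toEuclideanLin M v) = (l i : ℂ) * inner ℂ (b i) v := by
  rw [← (Matrix.isSymmetric_toEuclideanLin_iff.mpr hM) (b i) v, hb, inner_smul_left]
  simp

theorem quad {d : ℕ} {M : Matrix (Fin d) (Fin d) ℂ} (hM : M.IsHermitian)
    {b : OrthonormalBasis (Fin d) ℂ (EuclideanSpace ℂ (Fin d))} {l : Fin d → ℝ}
    (hb : ∀ i, Matrix.toEuclideanLin M (b i) = ((l i : ℝ) : ℂ) • b i)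
    (v : EuclideanSpace ℂ (Fin d)) :
    (inner ℂ v (Matrix.toEuclideanLin M v)).re = ∑ i, l i * ‖inner ℂ (b i) v‖ ^ 2 := by
  rw [← b.sum_inner_mul_inner, Complex.re_sum]
  refine Finset.sum_congr rfl fun i _ => ?_
  rw [inner_basis hM hb, ← inner_conj_symm v (b i), mul_left_comm, Complex.conj_mul']
  norm_cast

theorem quad_le {d : ℕ} {M : Matrix (Fin d) (Fin d) ℂ} (hM : M.IsHermitian)
    {b : OrthonormalBasis (Fin d) ℂ (EuclideanSpace ℂ (Fin d))} {l : Fin d → ℝ}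
    (hl : Monotone l)
    (hb : ∀ i, Matrix.toEuclideanLin M (b i) = ((l i : ℝ) : ℂ) • b i)
    (v : EuclideanSpace ℂ (Fin d)) (n : Fin d) (hv : ∀ i, n < i → inner ℂ (b i) v = 0) :
    (inner ℂ v (Matrix.toEuclideanLin M v)).re ≤ l n * ‖v‖ ^ 2 := by
  rw [quad hM hb, ← b.sum_sq_norm_inner_right v, Finset.mul_sum]
  refine Finset.sum_le_sum fun i _ => ?_
  rcases lt_or_ge n i with h | h
  · simp [hv i h]
  · exact mul_le_mul_of_nonneg_right (hl h) (by positivity)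

theorem le_quad {d : ℕ} {M : Matrix (Fin d) (Fin d) ℂ} (hM : M.IsHermitian)
    {b : OrthonormalBasis (Fin d) ℂ (EuclideanSpace ℂ (Fin d))} {l : Fin d → ℝ}
    (hl : Monotone l)
    (hb : ∀ i, Matrix.toEuclideanLin M (b i) = ((l i : ℝ) : ℂ) • b i)
    (v : EuclideanSpace ℂ (Fin d)) (n : Fin d) (hv : ∀ i, i < n → inner ℂ (b i) v = 0) :
    l n * ‖v‖ ^ 2 ≤ (inner ℂ v (Matrix.toEuclideanLin M v)).re := by
  rw [quad hM hb, ← b.sum_sq_norm_inner_right v, Finset.mul_sum]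
  refine Finset.sum_le_sum fun i _ => ?_
  rcases lt_or_ge i n with h | h
  · simp [hv i h]
  · exact mul_le_mul_of_nonneg_right (hl h) (by positivity)

theorem exists_orth {d : ℕ} {ι : Type} [Fintype ι] (f : ι → EuclideanSpace ℂ (Fin d))
    (h : Fintype.card ι < d) : ∃ v : EuclideanSpace ℂ (Fin d), v ≠ 0 ∧ ∀ i, inner ℂ (f i) v = 0 := by
  let L : EuclideanSpace ℂ (Fin d) →ₗ[ℂ] (ι → ℂ) :=
    LinearMap.pi fun i => (innerₛₗ ℂ (f i))
  have : LinearMap.ker L ≠ ⊥ := LinearMap.ker_ne_bot_of_finrank_lt (by simpa using h)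
  obtain ⟨v, hv, hv0⟩ := (Submodule.ne_bot_iff _).1 this
  refine ⟨v, hv0, fun i => ?_⟩
  have := congrFun (LinearMap.mem_ker.1 hv) i
  simpa [L] using this

theorem eig_mem {d : ℕ} {M : Matrix (Fin d) (Fin d) ℂ} (hM : M.IsHermitian)
    (v : Fin d → ℂ) (hv : v ≠ 0) (m : ℝ) (h : M.mulVec v = (m : ℂ) • v) :
    ∃ i, sortedEigs M i = m := by
  obtain ⟨-, b, hb⟩ := exists_basis M hM
  by_contra! hne
  apply hv
  have h' : Matrix.toEuclideanLin M (WithLp.toLp 2 v) = (m : ℂ) • WithLp.toLp 2 v := by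
    rw [Matrix.toLpLin_apply, ← WithLp.toLp_smul, ← h]
  have : WithLp.toLp 2 v = (0 : EuclideanSpace ℂ (Fin d)) := by
    apply b.repr.injective
    ext i
    rw [b.repr_apply_apply, map_zero]
    have e := inner_basis hM hb (WithLp.toLp 2 v) i
    rw [h', inner_smul_right] at e
    by_contra hc
    exact hne i (by exact_mod_cast (mul_right_cancel₀ hc e).symm)
  simpa using congrArg WithLp.ofLp this

theorem eig_exists {d : ℕ} {M : Matrix (Fin d) (Fin d) ℂ} (hM : M.IsHermitian) (i : Fin d) :
    ∃ v : Fin d → ℂ, v ≠ 0 ∧ M.mulVec v = ((sortedEigs M i : ℝ) : ℂ) • v := by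
  obtain ⟨-, b, hb⟩ := exists_basis M hM
  refine ⟨WithLp.ofLp (b i), ?_, ?_⟩
  · intro h
    apply b.orthonormal.ne_zero i
    ext j
    simpa using congrFun h j
  · have := congrArg WithLp.ofLp (hb i)
    simpa [Matrix.toLpLin_apply] using this

theorem quad_add {d : ℕ} (A C : Matrix (Fin d) (Fin d) ℂ) (w : Fin d → ℂ)
    (hC : ∀ v, C.mulVec v = A.mulVec v + (star w ⬝ᵥ v) • w) (v : EuclideanSpace ℂ (Fin d)) :
    (inner ℂ v (Matrix.toEuclideanLin C v)).re = (inner ℂ v (Matrix.toEuclideanLin A v)).re +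
      ‖inner ℂ (WithLp.toLp 2 w) v‖ ^ 2 := by
  have e : star w ⬝ᵥ (WithLp.ofLp v) = inner ℂ (WithLp.toLp 2 w) v := by
    rw [EuclideanSpace.inner_eq_star_dotProduct, dotProduct_comm]
  rw [Matrix.toLpLin_apply, hC, WithLp.toLp_add, WithLp.toLp_smul, inner_add_right,
    inner_smul_right, e, ← inner_conj_symm v (WithLp.toLp 2 w), Complex.mul_conj',
    Complex.add_re, Matrix.toLpLin_apply]
  norm_cast

end RankOneInterlacing

open RankOneInterlacing

/-- rank-one (negative semidefinite) Weyl interlacing, with the strictness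
criterion.  Here `B = -w w*` is a rank-one negative semidefinite self-adjoint matrix.
(The index `n` is 0-based, so "λ_{n-1}(A-B) ≤ λ_n(A) for n ≥ 2" becomes the statement for
`n : Fin d` with `1 ≤ (n : ℕ)`.) -/
theorem rank_one_interlacing_nsd {d : ℕ} (A B : Matrix (Fin d) (Fin d) ℂ)
    (hA : A.IsHermitian) (w : Fin d → ℂ) (hw : w ≠ 0)
    (hB : B = -Matrix.of fun i j => w i * star (w j)) :
    (∀ (n : Fin d) (hn : 1 ≤ (n : ℕ)),
      sortedEigs (A - B) ⟨(n : ℕ) - 1, by have := n.isLt; omega⟩ ≤ sortedEigs A n) ∧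
    (∀ n : Fin d, sortedEigs A n ≤ sortedEigs (A - B) n) ∧
    (∀ (n : Fin d) (hn : 1 ≤ (n : ℕ)),
      (sortedEigs (A - B) ⟨(n : ℕ) - 1, by have := n.isLt; omega⟩ < sortedEigs A n ∧
        sortedEigs A n < sortedEigs (A - B) n) ↔
      (Module.finrank ℂ
          (Module.End.eigenspace (Matrix.toLin' A) ((sortedEigs A n : ℝ) : ℂ)) = 1 ∧
        ∀ v : Fin d → ℂ, A.mulVec v = ((sortedEigs A n : ℝ) : ℂ) • v → v ≠ 0 →
          B.mulVec v ≠ 0)) := by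
  have hBv : ∀ v, B.mulVec v = -((star w ⬝ᵥ v) • w) := by
    intro v
    rw [hB, Matrix.neg_mulVec]
    congr 1
    ext i
    simp only [Matrix.mulVec, dotProduct, Matrix.of_apply, Pi.smul_apply, smul_eq_mul,
      Finset.sum_mul, Pi.star_apply]
    exact Finset.sum_congr rfl fun j _ => by ring
  have hBv0 : ∀ v, B.mulVec v = 0 ↔ star w ⬝ᵥ v = 0 := by
    intro v
    rw [hBv, neg_eq_zero, smul_eq_zero]
    simp [hw]
  have hBH : B.IsHermitian := by
    rw [hB]
    ext i j
    simp [Matrix.conjTranspose_apply, mul_comm]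
  have hCH : (A - B).IsHermitian := hA.sub hBH
  have hCv : ∀ v, (A - B).mulVec v = A.mulVec v + (star w ⬝ᵥ v) • w := by
    intro v
    rw [Matrix.sub_mulVec, hBv, sub_neg_eq_add]
  generalize A - B = C at hCH hCv
  obtain ⟨mA, a, ha⟩ := exists_basis A hA
  obtain ⟨mC, c, hc⟩ := exists_basis C hCH
  have hq := quad_add A C w hCv
  have h1 : ∀ (n : Fin d) (hn : 1 ≤ (n : ℕ)),
      sortedEigs C ⟨(n : ℕ) - 1, by have := n.isLt; omega⟩ ≤ sortedEigs A n := by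
    intro n hn
    have hlt := n.isLt
    obtain ⟨v, hv0, hv⟩ := exists_orth
      (Sum.elim (fun i : Set.Ioi n => a i) (Sum.elim
        (fun i : Set.Iio (⟨(n : ℕ) - 1, by omega⟩ : Fin d) => c i)
        (fun _ : Unit => WithLp.toLp 2 w))) (by simp; omega)
    have k1 := quad_le hA mA ha v n fun i hi => hv (Sum.inl ⟨i, hi⟩)
    have k2 := le_quad hCH mC hc v _ fun i hi => hv (Sum.inr (Sum.inl ⟨i, hi⟩))
    have k3 : inner ℂ (WithLp.toLp 2 w) v = 0 := hv (Sum.inr (Sum.inr ()))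
    rw [hq, k3] at k2
    have : 0 < ‖v‖ ^ 2 := by positivity
    refine le_of_mul_le_mul_right ?_ this
    simp at k2
    linarith
  have h2 : ∀ n : Fin d, sortedEigs A n ≤ sortedEigs C n := by
    intro n
    have hlt := n.isLt
    obtain ⟨v, hv0, hv⟩ := exists_orth
      (Sum.elim (fun i : Set.Ioi n => c i) (fun i : Set.Iio n => a i)) (by simp; omega)
    have k1 := quad_le hCH mC hc v n fun i hi => hv (Sum.inl ⟨i, hi⟩)
    have k2 := le_quad hA mA ha v n fun i hi => hv (Sum.inr ⟨i, hi⟩)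
    rw [hq] at k1
    have : 0 < ‖v‖ ^ 2 := by positivity
    refine le_of_mul_le_mul_right ?_ this
    have := sq_nonneg ‖inner ℂ (WithLp.toLp 2 w) v‖
    linarith
  refine ⟨h1, h2, fun n hn => ⟨?_, ?_⟩⟩
  · rintro ⟨s1, s2⟩
    have key : ∀ v : Fin d → ℂ, A.mulVec v = ((sortedEigs A n : ℝ) : ℂ) • v → v ≠ 0 →
        B.mulVec v ≠ 0 := by
      intro v hv hv0 hb
      rw [hBv0] at hb
      have := hCv v
      rw [hb, zero_smul, add_zero, hv] at this
      obtain ⟨i, hi⟩ := eig_mem hCH v hv0 _ this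
      rcases lt_or_ge i n with h | h
      · have : sortedEigs C i ≤ _ := mC (show i ≤ ⟨(n : ℕ) - 1, by omega⟩ by
          rw [Fin.le_def]; rw [Fin.lt_def] at h; simp only; omega)
        linarith
      · have := mC h
        linarith
    refine ⟨?_, key⟩
    obtain ⟨v, hv0, hv⟩ := eig_exists hA n
    have hmem : ∀ x, x ∈ Module.End.eigenspace (Matrix.toLin' A) ((sortedEigs A n : ℝ) : ℂ) ↔
        A.mulVec x = ((sortedEigs A n : ℝ) : ℂ) • x := fun x => by
      rw [Module.End.mem_eigenspace_iff, Matrix.toLin'_apply]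
    refine finrank_eq_one_iff_of_nonzero' ⟨v, (hmem v).2 hv⟩ (by simpa using hv0) |>.2 ?_
    rintro ⟨u, hu⟩
    have hwv : star w ⬝ᵥ v ≠ 0 := fun h => key v hv hv0 ((hBv0 v).2 h)
    refine ⟨(star w ⬝ᵥ u) / (star w ⬝ᵥ v), ?_⟩
    by_contra hne
    have hx : u - ((star w ⬝ᵥ u) / (star w ⬝ᵥ v)) • v ≠ 0 := by
      intro h
      apply hne
      ext1
      exact (sub_eq_zero.1 h).symm
    refine key _ ((hmem _).1 (Submodule.sub_mem _ hu (Submodule.smul_mem _ _ ((hmem v).2 hv)))) hx ?_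
    rw [hBv0, dotProduct_sub, dotProduct_smul, smul_eq_mul, div_mul_cancel₀ _ hwv, sub_self]
  · rintro ⟨-, key⟩
    have no : ∀ i, sortedEigs C i ≠ sortedEigs A n := by
      intro i hi
      obtain ⟨v, hv0, hv⟩ := eig_exists hCH i
      obtain ⟨u, hu0, hu⟩ := eig_exists hA n
      rw [hi, hCv] at hv
      have hwu : star w ⬝ᵥ u ≠ 0 := fun h => key u hu hu0 ((hBv0 u).2 h)
      have hwv : star w ⬝ᵥ v ≠ 0 := by
        intro h
        rw [h, zero_smul, add_zero] at hv
        exact key v hv hv0 ((hBv0 v).2 h)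
      have e : star u ⬝ᵥ (A.mulVec v) = ((sortedEigs A n : ℝ) : ℂ) * (star u ⬝ᵥ v) := by
        have : star u ᵥ* A = star (A.mulVec u) := by
          rw [Matrix.star_mulVec, hA.eq]
        rw [Matrix.dotProduct_mulVec, this, hu, star_smul, smul_dotProduct]
        simp
      have e2 := congrArg (fun x => star u ⬝ᵥ x) hv
      simp only [dotProduct_add, dotProduct_smul, e, smul_eq_mul] at e2
      have e3 : (star w ⬝ᵥ v) * (star u ⬝ᵥ w) = 0 := by linear_combination e2
      rcases mul_eq_zero.1 e3 with h | h
      · exact hwv h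
      · apply hwu
        have := congrArg star h
        rwa [Matrix.star_dotProduct, star_star, star_zero] at this
    exact ⟨lt_of_le_of_ne (h1 n hn) (no _), lt_of_le_of_ne (h2 n) (no n).symm⟩
end

section
/- Let H be a d×d Hermitian matrix and let u_1 ≠ u_2 be two indices with H_{u_1 u_2} = H_{u_2 u_1} = −1. For γ ∈ ℝ∖{0} let H(Γ_γ^cut) be the matrix obtained from H by setting the (u_1,u_2) and (u_2,u_1) entries to 0 and replacing the diagonal entries H_{u_1 u_1}, H_{u_2 u_2} by H_{u_1 u_1} − γ and H_{u_2 u_2} − 1/γ; for α ∈ ℝ let H(Γ_mag^α) be the matrix obtained from H by replacing the entries at (u_1,u_2) and (u_2,u_1) by −e^{iα} and −e^{−iα} respectively. Let p(γ) = 1 if γ < 0 and p(γ) = 0 otherwise, and use the convention λ_j(M) = −∞ for j < 1 and λ_j(M) = +∞ for j > d. Then for all n, all γ ∈ ℝ∖{0}, and all α ∈ ℝ: λ_{n−p(γ)}(H(Γ_γ^cut)) ≤ λ_n(H(Γ_mag^α)) ≤ λ_{n−p(γ)+1}(H(Γ_γ^cut)). -/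
open Matrix

/-- `eigE M j` is the `j`-th smallest eigenvalue (1-based, counted with multiplicity),
extended by the convention `λ_j = -∞` for `j < 1` and `λ_j = +∞` for `j > d`. -/
noncomputable def eigE {d : ℕ} (M : Matrix (Fin d) (Fin d) ℂ) (j : ℤ) : EReal :=
  if h : 1 ≤ j ∧ j ≤ (d : ℤ) then ((sortedEigs M ⟨(j - 1).toNat, by omega⟩ : ℝ) : EReal)
  else if j < 1 then ⊥ else ⊤

/-- The "cut" modification `H(Γ_γ^cut)` of `H` at the edge `(u1, u2)`. -/
noncomputable def cutMat {d : ℕ} (H : Matrix (Fin d) (Fin d) ℂ) (u1 u2 : Fin d) (γ : ℝ) :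
    Matrix (Fin d) (Fin d) ℂ :=
  Matrix.of fun a b =>
    if a = u1 ∧ b = u2 then 0
    else if a = u2 ∧ b = u1 then 0
    else if a = u1 ∧ b = u1 then H u1 u1 - (γ : ℂ)
    else if a = u2 ∧ b = u2 then H u2 u2 - (γ : ℂ)⁻¹
    else H a b

/-- The "magnetic" modification `H(Γ_mag^α)` of `H` at the edge `(u1, u2)`. -/
noncomputable def magMat {d : ℕ} (H : Matrix (Fin d) (Fin d) ℂ) (u1 u2 : Fin d) (α : ℝ) :
    Matrix (Fin d) (Fin d) ℂ :=
  Matrix.of fun a b =>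
    if a = u1 ∧ b = u2 then -Complex.exp (Complex.I * (α : ℝ))
    else if a = u2 ∧ b = u1 then -Complex.exp (-(Complex.I * (α : ℝ)))
    else H a b

theorem sortedEigs_mono {d : ℕ} (M : Matrix (Fin d) (Fin d) ℂ) : Monotone (sortedEigs M) := by
  unfold sortedEigs
  split_ifs with h
  · exact Tuple.monotone_sort _
  · exact monotone_const

/-- quadratic form -/
noncomputable def qf {d : ℕ} (M : Matrix (Fin d) (Fin d) ℂ) (x : EuclideanSpace ℂ (Fin d)) : ℝ :=
  (inner ℂ x (Matrix.toEuclideanLin M x)).re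

theorem exists_basis {d : ℕ} (M : Matrix (Fin d) (Fin d) ℂ) (hM : M.IsHermitian) :
    ∃ b : OrthonormalBasis (Fin d) ℂ (EuclideanSpace ℂ (Fin d)),
      ∀ x, qf M x = ∑ l, sortedEigs M l * ‖inner ℂ (b l) x‖ ^ 2 := by
  refine ⟨hM.eigenvectorBasis.reindex (Tuple.sort hM.eigenvalues).symm, fun x => ?_⟩
  have h1 : qf M x = ∑ l, hM.eigenvalues l * ‖inner ℂ (hM.eigenvectorBasis l) x‖ ^ 2 := by
    unfold qf
    rw [← hM.eigenvectorBasis.sum_inner_mul_inner, Complex.re_sum]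
    refine Finset.sum_congr rfl fun l _ => ?_
    have hs := Matrix.isSymmetric_toEuclideanLin_iff.mpr hM
    have he : Matrix.toEuclideanLin M (hM.eigenvectorBasis l)
        = (hM.eigenvalues l : ℂ) • hM.eigenvectorBasis l := by
      ext i
      have := congrFun (hM.mulVec_eigenvectorBasis l) i
      simpa [Matrix.toLpLin_apply] using this
    rw [← hs, he, inner_smul_left, ← inner_conj_symm x]
    rw [mul_left_comm, ← Complex.normSq_eq_conj_mul_self]
    simp only [Complex.conj_ofReal]
    rw [← Complex.ofReal_mul, Complex.ofReal_re, Complex.normSq_eq_norm_sq]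
  rw [h1, ← Equiv.sum_comp (Tuple.sort hM.eigenvalues)]
  refine Finset.sum_congr rfl fun l _ => ?_
  simp [sortedEigs, hM]

theorem eig_le {d : ℕ} (A B : Matrix (Fin d) (Fin d) ℂ) (hA : A.IsHermitian)
    (hB : B.IsHermitian) (k : ℕ) (f : EuclideanSpace ℂ (Fin d) →ₗ[ℂ] (Fin k → ℂ))
    (hq : ∀ x, f x = 0 → qf B x ≤ qf A x) (i j : Fin d) (hij : (i : ℕ) + k ≤ j) :
    sortedEigs B i ≤ sortedEigs A j := by
  obtain ⟨a, ha⟩ := exists_basis A hA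
  obtain ⟨b, hb⟩ := exists_basis B hB
  let g1 : EuclideanSpace ℂ (Fin d) →ₗ[ℂ] ({l : Fin d // l < i} → ℂ) :=
    LinearMap.pi fun l => (innerSL ℂ (b l.1)).toLinearMap
  let g2 : EuclideanSpace ℂ (Fin d) →ₗ[ℂ] ({l : Fin d // j < l} → ℂ) :=
    LinearMap.pi fun l => (innerSL ℂ (a l.1)).toLinearMap
  have hker : LinearMap.ker (g1.prod (g2.prod f)) ≠ ⊥ := by
    apply LinearMap.ker_ne_bot_of_finrank_lt
    simp only [Module.finrank_prod, Module.finrank_fintype_fun_eq_card, finrank_euclideanSpace,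
      Fintype.card_fin, Fintype.card_subtype]
    have e1 : (Finset.univ.filter fun l : Fin d => l < i).card = i := by
      rw [show (Finset.univ.filter fun l : Fin d => l < i) = Finset.Iio i by ext; simp, Fin.card_Iio]
    have e2 : (Finset.univ.filter fun l : Fin d => j < l).card = d - 1 - j := by
      rw [show (Finset.univ.filter fun l : Fin d => j < l) = Finset.Ioi j by ext; simp, Fin.card_Ioi]
    rw [e1, e2]
    have := j.2
    omega
  obtain ⟨x, hx, hx0⟩ := (Submodule.ne_bot_iff _).mp hker
  simp only [LinearMap.mem_ker, LinearMap.prod_apply, Function.prod, Prod.mk_eq_zero] at hx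
  obtain ⟨x1, x2, x3⟩ := hx
  have y1 : ∀ l, l < i → inner ℂ (b l) x = 0 := fun l hl => congrFun x1 ⟨l, hl⟩
  have y2 : ∀ l, j < l → inner ℂ (a l) x = 0 := fun l hl => congrFun x2 ⟨l, hl⟩
  have hpos : 0 < ‖x‖ ^ 2 := by positivity
  have z1 : sortedEigs B i * ‖x‖ ^ 2 ≤ qf B x := by
    rw [hb, ← b.sum_sq_norm_inner_right x, Finset.mul_sum]
    refine Finset.sum_le_sum fun l _ => ?_
    rcases lt_or_ge l i with h | h
    · simp [y1 l h]
    · exact mul_le_mul_of_nonneg_right (sortedEigs_mono B h) (by positivity)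
  have z2 : qf A x ≤ sortedEigs A j * ‖x‖ ^ 2 := by
    rw [ha, ← a.sum_sq_norm_inner_right x, Finset.mul_sum]
    refine Finset.sum_le_sum fun l _ => ?_
    rcases lt_or_ge j l with h | h
    · simp [y2 l h]
    · exact mul_le_mul_of_nonneg_right (sortedEigs_mono A h) (by positivity)
  exact le_of_mul_le_mul_right (z1.trans ((hq x x3).trans z2)) hpos

theorem eigE_le {d : ℕ} (A B : Matrix (Fin d) (Fin d) ℂ) (hA : A.IsHermitian)
    (hB : B.IsHermitian) (k : ℕ) (f : EuclideanSpace ℂ (Fin d) →ₗ[ℂ] (Fin k → ℂ))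
    (hq : ∀ x, f x = 0 → qf B x ≤ qf A x) (m n : ℤ) (hmn : m + k ≤ n) :
    eigE B m ≤ eigE A n := by
  unfold eigE
  split_ifs with h1 h2 h3 h4 h5 <;> first
    | exact bot_le
    | exact le_top
    | (exfalso; omega)
    | skip
  rw [EReal.coe_le_coe_iff]
  apply eig_le A B hA hB k f hq
  simp only
  omega

theorem cut_herm {d : ℕ} (H : Matrix (Fin d) (Fin d) ℂ) (hH : H.IsHermitian)
    (u1 u2 : Fin d) (hne : u1 ≠ u2) (γ : ℝ) : (cutMat H u1 u2 γ).IsHermitian := by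
  ext a b
  have h := fun a b => hH.apply a b
  have h1 := h u1 u1
  have h2 := h u2 u2
  have h3 := h a b
  simp only [conjTranspose_apply, cutMat, of_apply, RCLike.star_def] at *
  by_cases a1 : a = u1 <;> by_cases b1 : b = u1 <;> by_cases a2 : a = u2 <;>
    by_cases b2 : b = u2 <;> simp_all

theorem mag_eq {d : ℕ} (H : Matrix (Fin d) (Fin d) ℂ)
    (u1 u2 : Fin d) (hne : u1 ≠ u2) (γ : ℝ) (hγ : γ ≠ 0) (α : ℝ) :
    ∃ w : Fin d → ℂ, magMat H u1 u2 α =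
      cutMat H u1 u2 γ + (γ : ℂ) • vecMulVec w (star w) := by
  refine ⟨fun a => if a = u1 then 1 else
    if a = u2 then -Complex.exp (-(Complex.I * (α : ℝ))) / γ else 0, ?_⟩
  have hγ' : (γ : ℂ) ≠ 0 := by exact_mod_cast hγ
  have e1 : (starRingEnd ℂ) (Complex.exp (-(Complex.I * (α : ℝ))))
      = Complex.exp (Complex.I * (α : ℝ)) := by
    rw [← Complex.exp_conj]; simp
  have e2 : Complex.exp (-(Complex.I * (α : ℝ))) * Complex.exp (Complex.I * (α : ℝ)) = 1 := by
    rw [← Complex.exp_add]; simp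
  ext a b
  simp only [magMat, cutMat, of_apply, Matrix.add_apply, Matrix.smul_apply, vecMulVec_apply, Pi.star_apply,
    RCLike.star_def, smul_eq_mul]
  by_cases a1 : a = u1
  · subst a1
    by_cases b1 : b = a
    · subst b1; simp [hne]
    · by_cases b2 : b = u2
      · subst b2; simp [b1, e1]; field_simp
      · simp [b1, b2]
  · by_cases a2 : a = u2
    · subst a2
      by_cases b1 : b = u1
      · subst b1; simp [a1]; field_simp
      · by_cases b2 : b = a
        · subst b2; simp [a1, e1]; field_simp; linear_combination -e2
        · simp [a1, b1, b2]
    · simp [a1, a2]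

theorem vv_herm {d : ℕ} (w : Fin d → ℂ) (γ : ℝ) :
    ((γ : ℂ) • vecMulVec w (star w)).IsHermitian := by
  ext a b
  simp [vecMulVec_apply, mul_comm]

theorem qf_add {d : ℕ} (M : Matrix (Fin d) (Fin d) ℂ) (w : Fin d → ℂ) (γ : ℝ)
    (x : EuclideanSpace ℂ (Fin d)) :
    qf (M + (γ : ℂ) • vecMulVec w (star w)) x
      = qf M x + γ * ‖inner ℂ (WithLp.toLp 2 w) x‖ ^ 2 := by
  have h : Matrix.toEuclideanLin (vecMulVec w (star w)) x
      = inner ℂ (WithLp.toLp 2 w) x • (WithLp.toLp 2 w : EuclideanSpace ℂ (Fin d)) := by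
    ext i
    simp [Matrix.toLpLin_apply, vecMulVec_mulVec, EuclideanSpace.inner_eq_star_dotProduct,
      dotProduct_comm, mul_comm]
  unfold qf
  rw [map_add, map_smul, LinearMap.add_apply, LinearMap.smul_apply, h, inner_add_right,
    Complex.add_re, inner_smul_right, inner_smul_right, ← inner_conj_symm x (WithLp.toLp 2 w),
    Complex.mul_conj,
    ← Complex.ofReal_mul, Complex.ofReal_re, Complex.normSq_eq_norm_sq]

/-- interlacing between the "cut" and "magnetic" modifications of a Hermitian
matrix along an edge. -/
theorem cut_mag_interlacing {d : ℕ} (H : Matrix (Fin d) (Fin d) ℂ) (hH : H.IsHermitian)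
    (u1 u2 : Fin d) (hne : u1 ≠ u2) (h12 : H u1 u2 = -1) (h21 : H u2 u1 = -1)
    (p : ℝ → ℤ) (hp : ∀ γ, p γ = if γ < 0 then 1 else 0) :
    ∀ (n : ℤ) (γ : ℝ), γ ≠ 0 → ∀ α : ℝ,
      eigE (cutMat H u1 u2 γ) (n - p γ) ≤ eigE (magMat H u1 u2 α) n ∧
      eigE (magMat H u1 u2 α) n ≤ eigE (cutMat H u1 u2 γ) (n - p γ + 1) := by
  intro n γ hγ α
  obtain ⟨w, hw⟩ := mag_eq H u1 u2 hne γ hγ α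
  have hC := cut_herm H hH u1 u2 hne γ
  have hM : (magMat H u1 u2 α).IsHermitian := by
    rw [hw]; exact hC.add (vv_herm w γ)
  have hqf := fun x => qf_add (cutMat H u1 u2 γ) w γ x
  rw [← hw] at hqf
  let f : EuclideanSpace ℂ (Fin d) →ₗ[ℂ] (Fin 1 → ℂ) :=
    LinearMap.pi fun _ => (innerSL ℂ (WithLp.toLp 2 w : EuclideanSpace ℂ (Fin d))).toLinearMap
  have hf : ∀ x, f x = 0 → qf (magMat H u1 u2 α) x = qf (cutMat H u1 u2 γ) x := by
    intro x hx
    have : inner ℂ (WithLp.toLp 2 w : EuclideanSpace ℂ (Fin d)) x = 0 := congrFun hx 0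
    rw [hqf, this]; simp
  rw [hp]
  split_ifs with hneg
  · refine ⟨eigE_le _ _ hM hC 1 f (fun x hx => (hf x hx).ge) _ _ (by simp),
      eigE_le _ _ hC hM 0 0 (fun x _ => ?_) _ _ (by simp)⟩
    rw [hqf]
    nlinarith [sq_nonneg ‖inner ℂ (WithLp.toLp 2 w : EuclideanSpace ℂ (Fin d)) x‖]
  · refine ⟨eigE_le _ _ hM hC 0 0 (fun x _ => ?_) _ _ (by simp),
      eigE_le _ _ hC hM 1 f (fun x hx => (hf x hx).le) _ _ (by simp)⟩
    rw [hqf]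
    have : 0 ≤ γ := not_lt.mp hneg
    have := mul_nonneg this (sq_nonneg ‖inner ℂ (WithLp.toLp 2 w : EuclideanSpace ℂ (Fin d)) x‖)
    linarith
end

section
/- Let H be a d×d real symmetric matrix and let u_1 ≠ u_2 be two indices with H_{u_1 u_2} = H_{u_2 u_1} = −1. For α ∈ ℝ let H(Γ_mag^α) be the matrix obtained from H by replacing the entries at (u_1,u_2) and (u_2,u_1) by −e^{iα} and −e^{−iα} respectively, and let Ĥ = H(Γ_mag^π) be the matrix in which these two entries are replaced by +1. Then for every n, the minimum over α ∈ ℝ of λ_n(H(Γ_mag^α)) and the maximum over α ∈ ℝ of λ_n(H(Γ_mag^α)) are, in some order, equal to λ_n(H) and λ_n(Ĥ); that is, either min_α λ_n(H(Γ_mag^α)) = λ_n(H) and max_α λ_n(H(Γ_mag^α)) = λ_n(Ĥ), or min_α λ_n(H(Γ_mag^α)) = λ_n(Ĥ) and max_α λ_n(H(Γ_mag^α)) = λ_n(H). -/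
open Matrix

open scoped InnerProductSpace

lemma quad_form {d : ℕ} (T : EuclideanSpace ℂ (Fin d) →L[ℂ] EuclideanSpace ℂ (Fin d))
    (b : OrthonormalBasis (Fin d) ℂ (EuclideanSpace ℂ (Fin d))) (e : Fin d → ℝ)
    (hT : ∀ i, T (b i) = (e i : ℂ) • b i) (x : EuclideanSpace ℂ (Fin d)) :
    (⟪x, T x⟫_ℂ).re = ∑ i, e i * ‖⟪b i, x⟫_ℂ‖ ^ 2 := by
  have h : T x = ∑ i, ⟪b i, x⟫_ℂ • ((e i : ℂ) • b i) := by
    conv_lhs => rw [← b.sum_repr' x]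
    simp [map_sum, hT]
  rw [h, inner_sum, Complex.re_sum]
  refine Finset.sum_congr rfl fun i _ => ?_
  rw [inner_smul_right, inner_smul_right, ← inner_conj_symm x (b i)]
  rw [show ⟪b i, x⟫_ℂ * ((e i : ℂ) * (starRingEnd ℂ) ⟪b i, x⟫_ℂ) =
    (e i : ℂ) * (⟪b i, x⟫_ℂ * (starRingEnd ℂ) ⟪b i, x⟫_ℂ) by ring, Complex.mul_conj,
    Complex.normSq_eq_norm_sq, ← Complex.ofReal_mul, Complex.ofReal_re]

lemma weyl_aux {d : ℕ} (T S : EuclideanSpace ℂ (Fin d) →L[ℂ] EuclideanSpace ℂ (Fin d))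
    (b c : OrthonormalBasis (Fin d) ℂ (EuclideanSpace ℂ (Fin d))) (e f : Fin d → ℝ)
    (hT : ∀ i, T (b i) = (e i : ℂ) • b i) (hS : ∀ i, S (c i) = (f i : ℂ) • c i)
    (he : Monotone e) (hf : Monotone f) (n : Fin d) : e n ≤ f n + ‖T - S‖ := by
  let L : EuclideanSpace ℂ (Fin d) →ₗ[ℂ] ({i : Fin d // i ≠ n} → ℂ) :=
    LinearMap.pi fun i => if i.1 < n then (innerSL ℂ (b i.1)).toLinearMap
      else (innerSL ℂ (c i.1)).toLinearMap
  have hker : LinearMap.ker L ≠ ⊥ := by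
    apply LinearMap.ker_ne_bot_of_finrank_lt
    simp only [Module.finrank_fintype_fun_eq_card, finrank_euclideanSpace, Fintype.card_fin]
    have := Fintype.card_subtype_lt (p := fun i : Fin d => i ≠ n) (x := n) (by simp)
    simpa using this
  obtain ⟨x, hx, hx0⟩ := Submodule.exists_mem_ne_zero_of_ne_bot hker
  have hLx : ∀ i : {i : Fin d // i ≠ n}, L x i = 0 := fun i => by
    rw [LinearMap.mem_ker.1 hx]; rfl
  have hb : ∀ i, i < n → ⟪b i, x⟫_ℂ = 0 := fun i hi => by
    have := hLx ⟨i, hi.ne⟩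
    simpa [L, hi] using this
  have hc : ∀ i, n < i → ⟪c i, x⟫_ℂ = 0 := fun i hi => by
    have := hLx ⟨i, hi.ne'⟩
    simpa [L, hi.not_gt] using this
  have h1 : e n * ‖x‖ ^ 2 ≤ (⟪x, T x⟫_ℂ).re := by
    rw [quad_form T b e hT, ← b.sum_sq_norm_inner_right x, Finset.mul_sum]
    refine Finset.sum_le_sum fun i _ => ?_
    rcases lt_or_ge i n with h | h
    · simp [hb i h]
    · exact mul_le_mul_of_nonneg_right (he h) (by positivity)
  have h2 : (⟪x, S x⟫_ℂ).re ≤ f n * ‖x‖ ^ 2 := by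
    rw [quad_form S c f hS, ← c.sum_sq_norm_inner_right x, Finset.mul_sum]
    refine Finset.sum_le_sum fun i _ => ?_
    rcases lt_or_ge n i with h | h
    · simp [hc i h]
    · exact mul_le_mul_of_nonneg_right (hf h) (by positivity)
  have h3 : (⟪x, T x⟫_ℂ).re - (⟪x, S x⟫_ℂ).re ≤ ‖T - S‖ * ‖x‖ ^ 2 := by
    rw [← Complex.sub_re, ← inner_sub_right, ← _root_.sub_apply]
    calc _ ≤ ‖⟪x, (T - S) x⟫_ℂ‖ := Complex.re_le_norm _
      _ ≤ ‖x‖ * ‖(T - S) x‖ := norm_inner_le_norm _ _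
      _ ≤ ‖x‖ * (‖T - S‖ * ‖x‖) := by gcongr; exact (T - S).le_opNorm x
      _ = _ := by ring
  have hpos : 0 < ‖x‖ ^ 2 := by positivity
  by_contra! hlt
  nlinarith [mul_lt_mul_of_pos_right hlt hpos]

lemma sortedEigs_le {d : ℕ} (A B : Matrix (Fin d) (Fin d) ℂ) (hA : A.IsHermitian)
    (hB : B.IsHermitian) (n : Fin d) :
    sortedEigs A n ≤ sortedEigs B n +
      ‖toEuclideanCLM (n := Fin d) (𝕜 := ℂ) A - toEuclideanCLM (n := Fin d) (𝕜 := ℂ) B‖ := by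
  have key : ∀ (M : Matrix (Fin d) (Fin d) ℂ) (h : M.IsHermitian) (i : Fin d),
      toEuclideanCLM (n := Fin d) (𝕜 := ℂ) M
        ((h.eigenvectorBasis.reindex (Tuple.sort h.eigenvalues).symm) i) =
      ((h.eigenvalues (Tuple.sort h.eigenvalues i) : ℝ) : ℂ) •
        (h.eigenvectorBasis.reindex (Tuple.sort h.eigenvalues).symm) i := by
    intro M h i
    simp only [OrthonormalBasis.reindex_apply, Equiv.symm_symm]
    have := h.mulVec_eigenvectorBasis (Tuple.sort h.eigenvalues i)
    ext j
    have := congrFun this j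
    simpa using this
  unfold sortedEigs
  rw [dif_pos hA, dif_pos hB]
  exact weyl_aux _ _ _ _ _ _ (key A hA) (key B hB) (Tuple.monotone_sort hA.eigenvalues)
    (Tuple.monotone_sort hB.eigenvalues) n

lemma magMat_herm {d : ℕ} (H : Matrix (Fin d) (Fin d) ℝ) (hH : H.IsSymm)
    (u1 u2 : Fin d) (hne : u1 ≠ u2) (α : ℝ) :
    (magMat (H.map (fun x => (x : ℂ))) u1 u2 α).IsHermitian := by
  ext a b
  have hs : H a b = H b a := (hH.apply a b).symm
  simp only [magMat, conjTranspose_apply, of_apply, map_apply]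
  have e1 : star (-Complex.exp (Complex.I * (α : ℂ))) = -Complex.exp (-(Complex.I * (α : ℂ))) := by
    rw [star_neg]; simp [← Complex.exp_conj]
  have e2 : star (-Complex.exp (-(Complex.I * (α : ℂ)))) = -Complex.exp (Complex.I * (α : ℂ)) := by
    rw [star_neg]; simp [← Complex.exp_conj]
  by_cases h1 : b = u1 ∧ a = u2
  · have h2 : ¬ (a = u1 ∧ b = u2) := fun h => hne (h.1.symm.trans h1.2)
    rw [if_pos h1, if_neg h2, if_pos ⟨h1.2, h1.1⟩, e1]
  · rw [if_neg h1, if_neg (c := a = u2 ∧ b = u1) (fun h => h1 ⟨h.2, h.1⟩)]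
    by_cases h2 : b = u2 ∧ a = u1
    · rw [if_pos h2, if_pos ⟨h2.2, h2.1⟩, e2]
    · rw [if_neg h2, if_neg (fun h => h2 ⟨h.2, h.1⟩)]
      simp [hs]

lemma continuous_eig {d : ℕ} (H : Matrix (Fin d) (Fin d) ℝ) (hH : H.IsSymm)
    (u1 u2 : Fin d) (hne : u1 ≠ u2) (n : Fin d) :
    Continuous fun α => sortedEigs (magMat (H.map (fun x => (x : ℂ))) u1 u2 α) n := by
  set M := magMat (H.map (fun x => (x : ℂ))) u1 u2 with hM
  have hc : Continuous M := by
    refine continuous_pi fun a => continuous_pi fun b => ?_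
    simp only [hM, magMat, of_apply]
    split_ifs <;> fun_prop
  have hc2 : Continuous fun α => toEuclideanCLM (n := Fin d) (𝕜 := ℂ) (M α) :=
    (LinearMap.continuous_of_finiteDimensional
      (toEuclideanCLM (n := Fin d) (𝕜 := ℂ)).toAlgEquiv.toLinearMap).comp hc
  rw [continuous_iff_continuousAt]
  intro α
  rw [ContinuousAt, tendsto_iff_dist_tendsto_zero]
  refine squeeze_zero (fun _ => dist_nonneg) (fun β => ?_)
    (tendsto_iff_dist_tendsto_zero.1 (hc2.tendsto α))
  have i1 := sortedEigs_le (M β) (M α) (magMat_herm H hH u1 u2 hne β)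
    (magMat_herm H hH u1 u2 hne α) n
  have i2 := sortedEigs_le (M α) (M β) (magMat_herm H hH u1 u2 hne α)
    (magMat_herm H hH u1 u2 hne β) n
  rw [norm_sub_rev] at i2
  rw [Real.dist_eq, dist_eq_norm, abs_le]
  constructor <;> linarith

/-- The matrix `C` with entries `(u1,u2)`, `(u2,u1)` replaced by `z`, `w`. -/
def repl {d : ℕ} (C : Matrix (Fin d) (Fin d) ℂ) (u1 u2 : Fin d) (z w : ℂ) :
    Matrix (Fin d) (Fin d) ℂ :=
  Matrix.of fun a b => if a = u1 ∧ b = u2 then z else if a = u2 ∧ b = u1 then w else C a b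

lemma det_repl_affine_left {d : ℕ} (C : Matrix (Fin d) (Fin d) ℂ) (u1 u2 : Fin d)
    (hne : u1 ≠ u2) (z w : ℂ) :
    (repl C u1 u2 z w).det = (repl C u1 u2 0 w).det +
      z * ((repl C u1 u2 1 w).det - (repl C u1 u2 0 w).det) := by
  have h : ∀ z, repl C u1 u2 z w = (repl C u1 u2 0 w).updateRow u1
      ((repl C u1 u2 0 w) u1 + z • Pi.single u2 1) := by
    intro z
    ext a b
    by_cases ha : a = u1
    · subst ha
      by_cases hb : b = u2
      · subst hb; simp [repl]
      · simp [repl, hb, hne]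
    · simp [repl, ha]
  rw [h z, h 1]
  simp only [det_updateRow_add, det_updateRow_smul, updateRow_eq_self]
  ring

lemma det_repl_swap {d : ℕ} (C : Matrix (Fin d) (Fin d) ℂ) (hC : C.IsSymm) (u1 u2 : Fin d)
    (hne : u1 ≠ u2) (z w : ℂ) :
    (repl C u1 u2 z w).det = (repl C u1 u2 w z).det := by
  rw [← det_transpose]
  congr 1
  ext a b
  have := hC.apply a b
  simp only [repl, transpose_apply, of_apply]
  by_cases h1 : a = u1 ∧ b = u2
  · have h2 : ¬ (b = u1 ∧ a = u2) := fun h => hne (h1.1.symm.trans h.2)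
    rw [if_pos h1, if_neg h2, if_pos ⟨h1.2, h1.1⟩]
  · rw [if_neg h1, if_neg (c := b = u2 ∧ a = u1) (fun h => h1 ⟨h.2, h.1⟩)]
    simp only [and_comm (a := a = u2), this]

lemma det_repl_formula {d : ℕ} (C : Matrix (Fin d) (Fin d) ℂ) (hC : C.IsSymm) (u1 u2 : Fin d)
    (hne : u1 ≠ u2) : ∃ P Q : ℂ, ∀ z w : ℂ, z * w = 1 →
      (repl C u1 u2 z w).det = P + Q * (z + w) := by
  have hl := det_repl_affine_left C u1 u2 hne
  have hs := det_repl_swap C hC u1 u2 hne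
  set F := fun z w => (repl C u1 u2 z w).det with hF
  refine ⟨F 0 0 + (F 1 1 - 2 * F 1 0 + F 0 0), F 1 0 - F 0 0, fun z w hzw => ?_⟩
  have a1 : F z w = F 0 w + z * (F 1 w - F 0 w) := hl z w
  have a2 : F 0 w = F w 0 := hs 0 w
  have a3 : F 1 w = F w 1 := hs 1 w
  have a4 : F w 0 = F 0 0 + w * (F 1 0 - F 0 0) := hl w 0
  have a5 : F w 1 = F 0 1 + w * (F 1 1 - F 0 1) := hl w 1
  have a6 : F 0 1 = F 1 0 := hs 0 1
  change F z w = _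
  rw [a1, a2, a3, a4, a5, a6]
  linear_combination (F 1 1 - 2 * F 1 0 + F 0 0) * hzw

lemma charpoly_formula {d : ℕ} (H : Matrix (Fin d) (Fin d) ℝ) (hH : H.IsSymm)
    (u1 u2 : Fin d) (hne : u1 ≠ u2) (μ : ℂ) : ∃ P Q : ℂ, ∀ α : ℝ,
      (magMat (H.map (fun x => (x : ℂ))) u1 u2 α).charpoly.eval μ = P + Q * (Real.cos α : ℂ) := by
  have hC : (Matrix.scalar (Fin d) μ - H.map (fun x => (x : ℂ))).IsSymm := by
    ext a b
    have := hH.apply a b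
    simp [this, diagonal_apply, eq_comm]
  obtain ⟨P, Q, h⟩ := det_repl_formula _ hC u1 u2 hne
  refine ⟨P, 2 * Q, fun α => ?_⟩
  rw [eval_charpoly]
  have hm : Matrix.scalar (Fin d) μ - magMat (H.map (fun x => (x : ℂ))) u1 u2 α =
      repl (Matrix.scalar (Fin d) μ - H.map (fun x => (x : ℂ))) u1 u2
        (Complex.exp (Complex.I * α)) (Complex.exp (-(Complex.I * α))) := by
    ext a b
    simp only [repl, magMat, Matrix.sub_apply, of_apply]
    split_ifs with h1 h2
    · simp [h1.1, h1.2, hne]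
    · simp [h2.1, h2.2, hne.symm]
    · rfl
  rw [hm, h _ _ (by rw [← Complex.exp_add]; simp), Complex.ofReal_cos, Complex.cos]
  rw [mul_comm (α : ℂ) Complex.I, show -(α : ℂ) * Complex.I = -(Complex.I * α) by ring]
  ring

lemma eig_root {d : ℕ} (A : Matrix (Fin d) (Fin d) ℂ) (hA : A.IsHermitian) (n : Fin d) :
    A.charpoly.eval ((sortedEigs A n : ℝ) : ℂ) = 0 := by
  unfold sortedEigs
  rw [dif_pos hA, hA.charpoly_eq, Polynomial.eval_prod]
  apply Finset.prod_eq_zero (Finset.mem_univ (Tuple.sort hA.eigenvalues n))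
  simp

lemma ivt_aux (g : ℝ → ℝ) (hg : Continuous g) (S : Set ℝ) (hS : S.Finite) (a t b : ℝ)
    (hat : a ≤ t) (htb : t ≤ b)
    (hinj : ∀ x y, a ≤ x → x < y → y ≤ b → g x = g y → g x ∈ S) :
    g t ≤ max (g a) (g b) := by
  by_contra! hlt
  obtain ⟨v, hv, hvS⟩ := ((Set.Ioo_infinite hlt).sdiff hS).nonempty
  obtain ⟨x, hx, hxv⟩ := intermediate_value_Icc hat hg.continuousOn
    ⟨((le_max_left _ _).trans_lt hv.1).le, hv.2.le⟩
  obtain ⟨y, hy, hyv⟩ := intermediate_value_Icc' htb hg.continuousOn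
    ⟨((le_max_right _ _).trans_lt hv.1).le, hv.2.le⟩
  have hxt : x < t := lt_of_le_of_ne hx.2 (fun h => by subst h; exact hv.2.ne hxv.symm)
  apply hvS
  rw [← hxv]
  exact hinj x y hx.1 (hxt.trans_le hy.1) hy.2 (hxv.trans hyv.symm)

/-- for a real symmetric `H`, the minimum and the maximum over `α` of
`λ_n(H(Γ_mag^α))` are attained and are, in some order, the eigenvalues `λ_n(H(Γ_mag^0)) = λ_n(H)`
and `λ_n(Ĥ) = λ_n(H(Γ_mag^π))`.  (`n : Fin d` indexes the sorted eigenvalues, 0-based.) -/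
theorem mag_extrema_real_symmetric {d : ℕ} (H : Matrix (Fin d) (Fin d) ℝ) (hH : H.IsSymm)
    (u1 u2 : Fin d) (hne : u1 ≠ u2) (h12 : H u1 u2 = -1) (h21 : H u2 u1 = -1)
    (Hc : Matrix (Fin d) (Fin d) ℂ) (hHc : Hc = H.map (fun x => (x : ℂ))) (n : Fin d) :
    ∃ mn mx : ℝ,
      IsLeast {x : ℝ | ∃ α : ℝ, x = sortedEigs (magMat Hc u1 u2 α) n} mn ∧
      IsGreatest {x : ℝ | ∃ α : ℝ, x = sortedEigs (magMat Hc u1 u2 α) n} mx ∧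
      ((mn = sortedEigs (magMat Hc u1 u2 0) n ∧
          mx = sortedEigs (magMat Hc u1 u2 Real.pi) n) ∨
        (mn = sortedEigs (magMat Hc u1 u2 Real.pi) n ∧
          mx = sortedEigs (magMat Hc u1 u2 0) n)) := by
  subst hHc
  set M := magMat (H.map (fun x => (x : ℂ))) u1 u2 with hM
  have hherm : ∀ α, (M α).IsHermitian := magMat_herm H hH u1 u2 hne
  have hcont : Continuous fun α => sortedEigs (M α) n := continuous_eig H hH u1 u2 hne n
  have hform := charpoly_formula H hH u1 u2 hne
  set g : ℝ → ℝ := fun α => sortedEigs (M α) n with hg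
  have hroot : ∀ α, (M α).charpoly.eval ((g α : ℝ) : ℂ) = 0 := fun α => eig_root _ (hherm α) n
  have hcos : ∀ α β, Real.cos α = Real.cos β → g α = g β := by
    intro α β hab
    have hcp : (M α).charpoly = (M β).charpoly := by
      apply Polynomial.funext
      intro μ
      obtain ⟨P, Q, h⟩ := hform μ
      rw [h α, h β, hab]
    have he := ((hherm α).eigenvalues_eq_eigenvalues_iff (hherm β)).2 hcp
    simp only [hg, sortedEigs]
    rw [dif_pos (hherm α), dif_pos (hherm β), he]
  let S : Set ℝ := {x : ℝ | (M 0).charpoly.IsRoot (x : ℂ)}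
  have hS : S.Finite := by
    have h0 : (M 0).charpoly ≠ 0 := (charpoly_monic _).ne_zero
    exact (Polynomial.finite_setOfPred_isRoot h0).preimage Complex.ofReal_injective.injOn
  have hinj : ∀ x y, 0 ≤ x → x < y → y ≤ Real.pi → g x = g y → g x ∈ S := by
    intro x y hx hxy hy hxg
    have hlt := Real.cos_lt_cos_of_nonneg_of_le_pi hx hy hxy
    obtain ⟨P, Q, h⟩ := hform (g x)
    have h1 := hroot x
    have h2 := hroot y
    rw [← hxg, h y] at h2
    rw [h x] at h1
    have hne' : (Real.cos x : ℂ) - Real.cos y ≠ 0 := by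
      rw [← Complex.ofReal_sub, Complex.ofReal_ne_zero]; linarith
    have hQ : Q = 0 := by
      apply (mul_eq_zero.1 (show Q * ((Real.cos x : ℂ) - Real.cos y) = 0 by
        linear_combination h1 - h2)).resolve_right hne'
    have hP : P = 0 := by simpa [hQ] using h1
    change (M 0).charpoly.eval _ = 0
    rw [h 0, hP, hQ]; simp
  have hinj' : ∀ x y, 0 ≤ x → x < y → y ≤ Real.pi → -g x = -g y → -g x ∈ (Neg.neg ⁻¹' S) := by
    intro x y hx hxy hy hxg
    simpa using hinj x y hx hxy hy (neg_injective hxg)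
  have hup : ∀ α, g α ≤ max (g 0) (g Real.pi) := by
    intro α
    rw [hcos α (Real.arccos (Real.cos α))
      (Real.cos_arccos (Real.neg_one_le_cos _) (Real.cos_le_one _)).symm]
    exact ivt_aux g hcont S hS 0 _ Real.pi (Real.arccos_nonneg _) (Real.arccos_le_pi _) hinj
  have hlo : ∀ α, min (g 0) (g Real.pi) ≤ g α := by
    intro α
    rw [hcos α (Real.arccos (Real.cos α))
      (Real.cos_arccos (Real.neg_one_le_cos _) (Real.cos_le_one _)).symm]
    have := ivt_aux (fun x => -g x) hcont.neg (Neg.neg ⁻¹' S)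
      (hS.preimage neg_injective.injOn) 0 _ Real.pi (Real.arccos_nonneg (Real.cos α))
      (Real.arccos_le_pi _) hinj'
    rw [max_neg_neg] at this
    linarith
  rcases le_total (g 0) (g Real.pi) with h | h
  · refine ⟨g 0, g Real.pi, ⟨⟨0, rfl⟩, ?_⟩, ⟨⟨Real.pi, rfl⟩, ?_⟩, Or.inl ⟨rfl, rfl⟩⟩
    · rintro _ ⟨α, rfl⟩
      simpa [min_eq_left h] using hlo α
    · rintro _ ⟨α, rfl⟩
      simpa [max_eq_right h] using hup α
  · refine ⟨g Real.pi, g 0, ⟨⟨Real.pi, rfl⟩, ?_⟩, ⟨⟨0, rfl⟩, ?_⟩, Or.inr ⟨rfl, rfl⟩⟩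
    · rintro _ ⟨α, rfl⟩
      simpa [min_eq_right h] using hlo α
    · rintro _ ⟨α, rfl⟩
      simpa [max_eq_left h] using hup α
end

section
/- Let H be a d×d Hermitian matrix and let u_1 ≠ u_2 be two indices with H_{u_1 u_2} = H_{u_2 u_1} = −1. Suppose H f = λ f for some vector f with f_{u_1} ≠ 0 and γ := f_{u_2}/f_{u_1} a nonzero real number. Let H(Γ_γ^cut) be the matrix obtained from H by setting the (u_1,u_2) and (u_2,u_1) entries to 0 and replacing the diagonal entries H_{u_1 u_1}, H_{u_2 u_2} by H_{u_1 u_1} − γ and H_{u_2 u_2} − 1/γ. Then H(Γ_γ^cut) f = λ f, i.e. f is also an eigenvector of H(Γ_γ^cut) with the same eigenvalue λ. -/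
open Matrix

/-- if `H f = λ f` and `γ = f_{u2}/f_{u1}` is a nonzero real number, then `f` is
also an eigenvector, with the same eigenvalue, of the cut operator `H(Γ_γ^cut)`. -/
theorem cut_preserves_eigenvector {d : ℕ} (H : Matrix (Fin d) (Fin d) ℂ)
    (hH : H.IsHermitian) (u1 u2 : Fin d) (hne : u1 ≠ u2)
    (h12 : H u1 u2 = -1) (h21 : H u2 u1 = -1)
    (f : Fin d → ℂ) (lam : ℂ) (heig : H.mulVec f = lam • f)
    (hf1 : f u1 ≠ 0) (γ : ℝ) (hγ : γ ≠ 0) (hγeq : f u2 / f u1 = (γ : ℂ)) :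
    (cutMat H u1 u2 γ).mulVec f = lam • f := by
  have hγc : (γ : ℂ) ≠ 0 := by exact_mod_cast hγ
  have hf2 : f u2 = γ * f u1 := by
    rw [← hγeq]; field_simp
  rw [← heig]
  ext a
  have key : ∀ b, cutMat H u1 u2 γ a b * f b = H a b * f b
      + (if b = u2 then (if a = u1 then f u2 else if a = u2 then -((γ : ℂ)⁻¹ * f u2) else 0) else 0)
      + (if b = u1 then (if a = u2 then f u1 else if a = u1 then -(γ * f u1) else 0) else 0) := by
    intro b
    have hne' := hne.symm
    simp only [cutMat, Matrix.of_apply]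
    by_cases ha1 : a = u1
    · subst ha1
      by_cases hb1 : b = a
      · subst hb1; simp [hne]; ring
      · by_cases hb2 : b = u2
        · subst hb2; simp [hne, hne', h12]
        · simp [hne, hb1, hb2]
    · by_cases ha2 : a = u2
      · subst ha2
        by_cases hb1 : b = u1
        · subst hb1; simp [hne, hne', h21]
        · by_cases hb2 : b = a
          · subst hb2; simp [hne']; ring
          · simp [hne', hb1, hb2]
      · simp [ha1, ha2]
  simp only [Matrix.mulVec, dotProduct]
  rw [Finset.sum_congr rfl (fun b _ => key b), Finset.sum_add_distrib, Finset.sum_add_distrib]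
  simp only [Finset.sum_ite_eq', Finset.mem_univ, if_true]
  by_cases ha1 : a = u1
  · subst ha1; simp [hne, hf2]
  · by_cases ha2 : a = u2
    · subst ha2; simp [hne.symm, hf2, hγc]
    · simp [ha1, ha2]
end

section
/- Let f : ℝ^k × ℝ^m → ℝ be a smooth function such that (0,0) is a non-degenerate critical point of f with inertia I_X. Suppose that for every y ∈ ℝ^k in a neighborhood of 0, the function y' ↦ f(y, y') has a critical point at y' = 0 whose inertia I_{Y⊥} (as a critical point of a function of y' alone) does not depend on y. Then all mixed second partial derivatives ∂²f/∂y_i∂y'_j vanish at (0,0), so the Hessian of f at (0,0) is block-diagonal with respect to the splitting ℝ^k ⊕ ℝ^m, and the inertia of the critical point 0 of the restricted function y ↦ f(y, 0) equals I_X − I_{Y⊥} (componentwise difference of the triples). -/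
open Matrix

/-- The Hessian matrix of second partial derivatives of `f : ℝ^k → ℝ` at `x₀`. -/
noncomputable def hessMat {k : ℕ} (f : (Fin k → ℝ) → ℝ) (x₀ : Fin k → ℝ) :
    Matrix (Fin k) (Fin k) ℝ :=
  Matrix.of fun i j => fderiv ℝ (fun x => fderiv ℝ f x (Pi.single j 1)) x₀ (Pi.single i 1)

/-- Numbers of negative / zero / positive eigenvalues of a real symmetric matrix. -/
noncomputable def negEigCount {k : ℕ} (M : Matrix (Fin k) (Fin k) ℝ) : ℕ :=
  {i : Fin k | sortedEigs M i < 0}.ncard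

noncomputable def zeroEigCount {k : ℕ} (M : Matrix (Fin k) (Fin k) ℝ) : ℕ :=
  {i : Fin k | sortedEigs M i = 0}.ncard

noncomputable def posEigCount {k : ℕ} (M : Matrix (Fin k) (Fin k) ℝ) : ℕ :=
  {i : Fin k | 0 < sortedEigs M i}.ncard

theorem hessMat_isHermitian {n : ℕ} (f : (Fin n → ℝ) → ℝ) (hf : ContDiff ℝ (⊤ : ℕ∞) f)
    (x : Fin n → ℝ) : (hessMat f x).IsHermitian := by
  have hd : Differentiable ℝ (fderiv ℝ f) :=
    (hf.fderiv_right (m := 1) (by norm_cast)).differentiable (by norm_num)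
  have key : ∀ i j, hessMat f x i j
      = fderiv ℝ (fderiv ℝ f) x (Pi.single i 1) (Pi.single j 1) := by
    intro i j
    simp only [hessMat, Matrix.of_apply]
    rw [fderiv_clm_apply (hd x) (differentiableAt_const _)]
    simp
  have hs : IsSymmSndFDerivAt ℝ f x :=
    (hf.contDiffAt (x := x)).isSymmSndFDerivAt (by simp; norm_cast)
  ext i j
  simp only [Matrix.conjTranspose_apply, key, star_trivial]
  exact hs _ _

theorem hessMat_comp_affine {p n : ℕ} (f : (Fin n → ℝ) → ℝ) (hf : ContDiff ℝ (⊤ : ℕ∞) f)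
    (L : (Fin p → ℝ) →L[ℝ] (Fin n → ℝ)) (v : Fin n → ℝ) (g : (Fin p → ℝ) → ℝ)
    (hg : ∀ x, g x = f (v + L x)) (x : Fin p → ℝ) :
    (∀ u, fderiv ℝ g x u = fderiv ℝ f (v + L x) (L u)) ∧
    ∀ w u, fderiv ℝ (fun x => fderiv ℝ g x u) x w
      = fderiv ℝ (fun z => fderiv ℝ f z (L u)) (v + L x) (L w) := by
  have hA : ∀ x, HasFDerivAt (fun x => v + L x) L x := fun x => (L.hasFDerivAt).const_add v
  have hd0 : Differentiable ℝ f := hf.differentiable (by simp)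
  have hd : Differentiable ℝ (fderiv ℝ f) :=
    (hf.fderiv_right (m := 1) (by norm_cast)).differentiable (by norm_num)
  have h1 : ∀ x u, fderiv ℝ g x u = fderiv ℝ f (v + L x) (L u) := by
    intro x u
    have : g = f ∘ (fun x => v + L x) := funext hg
    rw [this, ((hd0 (v + L x)).hasFDerivAt.comp x (hA x)).fderiv]
    rfl
  refine ⟨h1 x, fun w u => ?_⟩
  have h2 : (fun x => fderiv ℝ g x u) = (fun z => fderiv ℝ f z (L u)) ∘ (fun x => v + L x) := by
    funext y; exact h1 y u
  have h3 : DifferentiableAt ℝ (fun z => fderiv ℝ f z (L u)) (v + L x) :=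
    (hd _).clm_apply (differentiableAt_const _)
  rw [h2, (h3.hasFDerivAt.comp x (hA x)).fderiv]
  rfl

theorem eigCount_eq {n : ℕ} (M : Matrix (Fin n) (Fin n) ℝ) (hM : M.IsHermitian) (P : ℝ → Prop)
    [DecidablePred P] :
    {i : Fin n | P (sortedEigs M i)}.ncard = M.charpoly.roots.countP P := by
  have h1 : M.charpoly.roots = Multiset.map (sortedEigs M) Finset.univ.val := by
    rw [hM.roots_charpoly_eq_eigenvalues]
    have h2 : sortedEigs M = hM.eigenvalues ∘ Tuple.sort hM.eigenvalues := by
      simp only [sortedEigs, dif_pos hM]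
    have h3 : Multiset.map (Tuple.sort hM.eigenvalues) (Finset.univ : Finset (Fin n)).val
        = Finset.univ.val := by
      simpa using congrArg Finset.val (Finset.map_univ_equiv (Tuple.sort hM.eigenvalues))
    rw [h2, ← Multiset.map_map hM.eigenvalues, h3]
    rfl
  rw [h1, Multiset.countP_map, Set.ncard_eq_toFinset_card']
  simp [Finset.card_def]

theorem eigCount_block {k m : ℕ} (H : Matrix (Fin (k + m)) (Fin (k + m)) ℝ)
    (A : Matrix (Fin k) (Fin k) ℝ) (D : Matrix (Fin m) (Fin m) ℝ)
    (hH : H.IsHermitian)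
    (hA : ∀ i j, A i j = H (Fin.castAdd m i) (Fin.castAdd m j))
    (hD : ∀ i j, D i j = H (Fin.natAdd k i) (Fin.natAdd k j))
    (hz : ∀ i j, H (Fin.castAdd m i) (Fin.natAdd k j) = 0) (P : ℝ → Prop) [DecidablePred P] :
    {i : Fin k | P (sortedEigs A i)}.ncard + {i : Fin m | P (sortedEigs D i)}.ncard
      = {i : Fin (k + m) | P (sortedEigs H i)}.ncard := by
  have hAH : A.IsHermitian := by
    ext i j
    simpa [hA] using hH.apply (Fin.castAdd m i) (Fin.castAdd m j)
  have hDH : D.IsHermitian := by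
    ext i j
    simpa [hD] using hH.apply (Fin.natAdd k i) (Fin.natAdd k j)
  have hz' : ∀ i j, H (Fin.natAdd k j) (Fin.castAdd m i) = 0 := by
    intro i j
    have := hH.apply (Fin.natAdd k j) (Fin.castAdd m i)
    rw [← this, hz]; simp
  have hB : H = Matrix.reindex finSumFinEquiv finSumFinEquiv (Matrix.fromBlocks A 0 0 D) := by
    ext i j
    refine Fin.addCases (fun i => ?_) (fun i => ?_) i <;>
      refine Fin.addCases (fun j => ?_) (fun j => ?_) j <;> simp [hA, hD, hz, hz']
  have hc : H.charpoly = A.charpoly * D.charpoly := by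
    rw [hB, Matrix.charpoly_reindex, Matrix.charpoly_fromBlocks_zero₂₁]
  rw [eigCount_eq A hAH, eigCount_eq D hDH, eigCount_eq H hH, hc,
    Polynomial.roots_mul (mul_ne_zero A.charpoly_monic.ne_zero D.charpoly_monic.ne_zero),
    Multiset.countP_add]

/-- Reduction Theorem: if `(0,0) ∈ ℝ^k × ℝ^m` is a non-degenerate critical
point of a smooth `f` with inertia `I_X = (a, 0, c)`, and for every `y` near `0` the map
`y' ↦ f(y, y')` has a critical point at `y' = 0` with constant inertia `I_{Y⊥} = (a', b', c')`,
then the mixed second partials vanish at `(0,0)` (the Hessian is block-diagonal) and the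
inertia of the critical point `0` of `y ↦ f(y, 0)` is `I_X - I_{Y⊥}` (equivalently,
`I_X = I_Y + I_{Y⊥}`, stated additively to avoid truncated subtraction). -/
theorem reduction_theorem {k m : ℕ} (f : (Fin (k + m) → ℝ) → ℝ)
    (hf : ContDiff ℝ (⊤ : ℕ∞) f)
    (a c a' b' c' : ℕ)
    (hcrit : fderiv ℝ f 0 = 0)
    (hneg : negEigCount (hessMat f 0) = a)
    (hzero : zeroEigCount (hessMat f 0) = 0)
    (hpos : posEigCount (hessMat f 0) = c)
    (hsub : ∀ᶠ y in nhds (0 : Fin k → ℝ),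
      fderiv ℝ (fun y' : Fin m → ℝ => f (Fin.append y y')) 0 = 0 ∧
      negEigCount (hessMat (fun y' => f (Fin.append y y')) 0) = a' ∧
      zeroEigCount (hessMat (fun y' => f (Fin.append y y')) 0) = b' ∧
      posEigCount (hessMat (fun y' => f (Fin.append y y')) 0) = c') :
    (∀ (i : Fin k) (j : Fin m),
      hessMat f 0 (Fin.castAdd m i) (Fin.natAdd k j) = 0) ∧
    negEigCount (hessMat (fun y : Fin k → ℝ => f (Fin.append y 0)) 0) + a' = a ∧
    zeroEigCount (hessMat (fun y : Fin k → ℝ => f (Fin.append y 0)) 0) + b' = 0 ∧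
    posEigCount (hessMat (fun y : Fin k → ℝ => f (Fin.append y 0)) 0) + c' = c := by
  classical
  let Lk : (Fin k → ℝ) →L[ℝ] (Fin (k + m) → ℝ) := LinearMap.toContinuousLinearMap
    { toFun := fun y => Fin.append y 0
      map_add' := by
        intro x y; ext i
        refine Fin.addCases (fun i => ?_) (fun i => ?_) i <;> simp
      map_smul' := by
        intro r y; ext i
        refine Fin.addCases (fun i => ?_) (fun i => ?_) i <;> simp }
  let Lm : (Fin m → ℝ) →L[ℝ] (Fin (k + m) → ℝ) := LinearMap.toContinuousLinearMap
    { toFun := fun y => Fin.append 0 y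
      map_add' := by
        intro x y; ext i
        refine Fin.addCases (fun i => ?_) (fun i => ?_) i <;> simp
      map_smul' := by
        intro r y; ext i
        refine Fin.addCases (fun i => ?_) (fun i => ?_) i <;> simp }
  have hLk : ∀ y, Lk y = Fin.append y 0 := fun y => rfl
  have hLm : ∀ y, Lm y = Fin.append 0 y := fun y => rfl
  have happ : ∀ y y', Fin.append y y' = Lk y + Lm y' := by
    intro y y'; ext i
    refine Fin.addCases (fun i => ?_) (fun i => ?_) i <;> simp [hLk, hLm]
  have hek : ∀ i, Lk (Pi.single i 1) = Pi.single (Fin.castAdd m i) 1 := by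
    intro i; ext j
    refine Fin.addCases (fun j => ?_) (fun j => ?_) j
    · simp [hLk, Pi.single_apply]
    · have : Fin.natAdd k j ≠ Fin.castAdd m i := by
        intro h; have := congrArg Fin.val h; simp at this; omega
      simp [hLk, Pi.single_apply, this]
  have hem : ∀ i, Lm (Pi.single i 1) = Pi.single (Fin.natAdd k i) 1 := by
    intro i; ext j
    refine Fin.addCases (fun j => ?_) (fun j => ?_) j
    · have : Fin.castAdd m j ≠ Fin.natAdd k i := by
        intro h; have := congrArg Fin.val h; simp at this; omega
      simp [hLm, Pi.single_apply, this]
    · simp [hLm, Pi.single_apply]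
  have hM := fun y => hessMat_comp_affine f hf Lm (Lk y) (fun y' => f (Fin.append y y'))
    (fun x => by rw [happ]) 0
  have hK := hessMat_comp_affine f hf Lk 0 (fun y => f (Fin.append y 0))
    (fun x => by rw [happ]; simp) 0
  have hd : Differentiable ℝ (fderiv ℝ f) :=
    (hf.fderiv_right (m := 1) (by norm_cast)).differentiable (by norm_num)
  have hmix : ∀ (i : Fin k) (j : Fin m),
      hessMat f 0 (Fin.castAdd m i) (Fin.natAdd k j) = 0 := by
    intro i j
    have hev : (fun y => fderiv ℝ f (Lk y) (Pi.single (Fin.natAdd k j) 1))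
        =ᶠ[nhds 0] fun _ => (0 : ℝ) := by
      filter_upwards [hsub] with y hy
      have := (hM y).1 (Pi.single j 1)
      rw [hy.1, hem] at this
      simpa using this.symm
    have h3 : DifferentiableAt ℝ (fun z => fderiv ℝ f z (Pi.single (Fin.natAdd k j) 1))
        (Lk 0) := (hd _).clm_apply (differentiableAt_const _)
    have h4 := (h3.hasFDerivAt.comp 0 Lk.hasFDerivAt).fderiv
    have h5 := hev.fderiv_eq (𝕜 := ℝ)
    have h6 := DFunLike.congr_fun (h4.symm.trans h5) (Pi.single i 1)
    simp only [ContinuousLinearMap.comp_apply, hek, map_zero] at h6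
    simpa [hessMat] using h6
  have hs := hsub.self_of_nhds
  have hHerm := hessMat_isHermitian f hf 0
  have hA : ∀ i j, hessMat (fun y : Fin k → ℝ => f (Fin.append y 0)) 0 i j
      = hessMat f 0 (Fin.castAdd m i) (Fin.castAdd m j) := by
    intro i j
    have := hK.2 (Pi.single i 1) (Pi.single j 1)
    rw [hek, hek, map_zero, add_zero] at this
    exact this
  have hD : ∀ i j, hessMat (fun y' : Fin m → ℝ => f (Fin.append 0 y')) 0 i j
      = hessMat f 0 (Fin.natAdd k i) (Fin.natAdd k j) := by
    intro i j
    have := (hM 0).2 (Pi.single i 1) (Pi.single j 1)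
    rw [hem, hem, map_zero, map_zero, add_zero] at this
    exact this
  have hc := fun (P : ℝ → Prop) => eigCount_block (hessMat f 0) _ _ hHerm hA hD hmix P
  refine ⟨hmix, ?_, ?_, ?_⟩
  · rw [← hs.2.1, ← hneg]; exact hc (fun x => x < 0)
  · rw [← hs.2.2.1, ← hzero]; exact hc (fun x => x = 0)
  · rw [← hs.2.2.2, ← hpos]; exact hc (fun x => 0 < x)
end

section
/- Let Γ = (V,E) be a simple finite connected graph, q : V → ℝ a potential, and H(Γ) = Q − C the discrete Schrödinger operator, where Q = diag(q) and C is the adjacency matrix of Γ. Let β = |E| − |V| + 1, fix a spanning tree of Γ, and let S = {e_1, …, e_β} be the edges not in the tree, with e_j = (u_j, v_j). Suppose f is an eigenvector of H(Γ) corresponding to a simple eigenvalue λ = λ_n(H(Γ)) and f is nonzero at every vertex. Let φ be the number of edges (u,v) ∈ E with f_u f_v < 0. Set γ̃_j = f_{v_j}/f_{u_j} for j = 1,…,β, and let p = #{j : γ̃_j < 0}. Let H(Γ^cut_{γ̃_1,…,γ̃_β}) be the matrix obtained from H(Γ) by, for each j, setting the (u_j,v_j) and (v_j,u_j) entries to 0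 and replacing the diagonal entries q_{u_j}, q_{v_j} by q_{u_j} − γ̃_j and q_{v_j} − 1/γ̃_j. Then λ_n(H(Γ)) = λ_{φ−p+1}(H(Γ^cut_{γ̃_1,…,γ̃_β})), i.e. λ is the (φ−p+1)-th smallest eigenvalue of the cut operator. -/
open Matrix

noncomputable def sE {𝕜 : Type*} [RCLike 𝕜] {d : ℕ} (M : Matrix (Fin d) (Fin d) 𝕜)
    (i : ℕ) : ℝ :=
  if h : i < d then sortedEigs M ⟨i, h⟩ else 0

/-- The discrete Schrödinger operator `H(Γ) = Q - C` of a graph `G` with potential `q`. -/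
noncomputable def schrodOp {N : ℕ} (G : SimpleGraph (Fin N)) [DecidableRel G.Adj]
    (q : Fin N → ℝ) : Matrix (Fin N) (Fin N) ℝ :=
  Matrix.diagonal q - G.adjMatrix ℝ

/-- The cut operator `H(Γ^cut_γ)`: for each `j`, the matrix entries at `(uE j, vE j)` and
`(vE j, uE j)` (equal to `-1` in `H(Γ)`) are replaced by `0` and the diagonal entries at
`uE j`, `vE j` are decreased by `γ j` and `(γ j)⁻¹` respectively. -/
noncomputable def schrodCut {N β : ℕ} (G : SimpleGraph (Fin N)) [DecidableRel G.Adj]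
    (q : Fin N → ℝ) (uE vE : Fin β → Fin N) (γ : Fin β → ℝ) :
    Matrix (Fin N) (Fin N) ℝ :=
  schrodOp G q - ∑ j : Fin β, Matrix.of (fun a b =>
    if a = uE j ∧ b = uE j then γ j
    else if a = vE j ∧ b = vE j then (γ j)⁻¹
    else if (a = uE j ∧ b = vE j) ∨ (a = vE j ∧ b = uE j) then -1
    else 0)

/-- The magnetic operator `H(Γ^α_mag)`: the entries of `H(Γ)` at `(uE j, vE j)` and
`(vE j, uE j)` (equal to `-1`) are replaced by `-exp(i α j)` and `-exp(-i α j)`. -/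
noncomputable def schrodMag {N β : ℕ} (G : SimpleGraph (Fin N)) [DecidableRel G.Adj]
    (q : Fin N → ℝ) (uE vE : Fin β → Fin N) (α : Fin β → ℝ) :
    Matrix (Fin N) (Fin N) ℂ :=
  (schrodOp G q).map (fun x => (x : ℂ)) + ∑ j : Fin β, Matrix.of (fun a b =>
    if a = uE j ∧ b = vE j then 1 - Complex.exp (Complex.I * (α j : ℝ))
    else if a = vE j ∧ b = uE j then 1 - Complex.exp (-(Complex.I * (α j : ℝ)))
    else 0)

/-- The number of sign changes ("zeros") of a vertex function `f`: the number of edges of `G`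
at whose endpoints `f` has different signs. -/
noncomputable def signChanges {N : ℕ} (G : SimpleGraph (Fin N)) (f : Fin N → ℝ) : ℕ :=
  {e : Sym2 (Fin N) | e ∈ G.edgeSet ∧ ∀ u v : Fin N, e = s(u, v) → f u * f v < 0}.ncard

/-- sorted value from counting -/
theorem sorted_eq_of_counts {N : ℕ} (e : Fin N → ℝ) (l : ℝ) (k : ℕ) (hk : k < N)
    (h1 : (Finset.univ.filter (fun i => e i < l)).card ≤ k)
    (h2 : (Finset.univ.filter (fun i => l < e i)).card + k + 1 ≤ N) :
    (e ∘ Tuple.sort e) ⟨k, hk⟩ = l := by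
  have hm := Tuple.monotone_sort e
  have key : ∀ (P : ℝ → Prop) [DecidablePred P],
      (Finset.univ.filter (fun i => P ((e ∘ Tuple.sort e) i))).card
        = (Finset.univ.filter (fun i => P (e i))).card := by
    intro P _
    apply Finset.card_bij (fun i _ => Tuple.sort e i)
    · intro a ha; simpa using ha
    · intro a _ b _ h; exact (Tuple.sort e).injective h
    · intro b hb
      exact ⟨(Tuple.sort e).symm b, by simpa using hb, by simp⟩
  rw [← key (fun t => t < l)] at h1
  rw [← key (fun t => l < t)] at h2
  apply le_antisymm
  · by_contra hlt
    push Not at hlt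
    have : (Finset.Ici (⟨k, hk⟩ : Fin N)).card ≤
        (Finset.univ.filter (fun i => l < (e ∘ Tuple.sort e) i)).card := by
      apply Finset.card_le_card
      intro i hi
      simp only [Finset.mem_Ici] at hi
      simp only [Finset.mem_filter, Finset.mem_univ, true_and]
      exact lt_of_lt_of_le hlt (hm hi)
    rw [Fin.card_Ici] at this
    simp only at this
    omega
  · by_contra hlt
    push Not at hlt
    have : (Finset.Iic (⟨k, hk⟩ : Fin N)).card ≤
        (Finset.univ.filter (fun i => (e ∘ Tuple.sort e) i < l)).card := by
      apply Finset.card_le_card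
      intro i hi
      simp only [Finset.mem_Iic] at hi
      simp only [Finset.mem_filter, Finset.mem_univ, true_and]
      exact lt_of_le_of_lt (hm hi) hlt
    rw [Fin.card_Iic] at this
    simp only at this
    omega

/-- A vector in the span of eigenvectors indexed by `S`, killed by few linear conditions. -/
theorem exists_test_vector {N : ℕ} {A : Matrix (Fin N) (Fin N) ℝ} (hA : A.IsHermitian) (l : ℝ)
    (S : Finset (Fin N)) {ι : Type} [Fintype ι] (L : (Fin N → ℝ) →ₗ[ℝ] (ι → ℝ))
    (hc : Fintype.card ι < S.card) :
    ∃ (x : Fin N → ℝ) (c : S → ℝ), c ≠ 0 ∧ L x = 0 ∧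
      x ⬝ᵥ (A *ᵥ x - l • x) = ∑ i : S, (hA.eigenvalues i - l) * (c i) ^ 2 := by
  let b : Fin N → (Fin N → ℝ) := fun i => WithLp.ofLp (hA.eigenvectorBasis i)
  have hb : ∀ i j, b i ⬝ᵥ b j = if i = j then 1 else 0 := by
    intro i j
    have := (orthonormal_iff_ite.mp hA.eigenvectorBasis.orthonormal) j i
    rw [EuclideanSpace.inner_eq_star_dotProduct] at this
    simp only [star_trivial] at this
    rw [show b i ⬝ᵥ b j = _ from this]
    simp [eq_comm]
  have hAb : ∀ i, A *ᵥ b i = hA.eigenvalues i • b i := fun i => hA.mulVec_eigenvectorBasis i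
  let M : (S → ℝ) →ₗ[ℝ] (Fin N → ℝ) := Fintype.linearCombination ℝ (fun i : S => b i)
  have hker : LinearMap.ker (L ∘ₗ M) ≠ ⊥ := by
    apply LinearMap.ker_ne_bot_of_finrank_lt
    simpa using hc
  obtain ⟨c, hc1, hc0⟩ := (Submodule.ne_bot_iff _).mp hker
  refine ⟨M c, c, hc0, by simpa using hc1, ?_⟩
  have hM : M c = ∑ i : S, c i • b i := by simp [M, Fintype.linearCombination_apply]
  have hAM : A *ᵥ M c - l • M c = ∑ i : S, ((hA.eigenvalues i - l) * c i) • b i := by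
    rw [hM, Matrix.mulVec_sum, Finset.smul_sum, ← Finset.sum_sub_distrib]
    refine Finset.sum_congr rfl fun i _ => ?_
    rw [Matrix.mulVec_smul, hAb]
    ext t
    simp
    ring
  rw [hAM, hM, sum_dotProduct]
  refine Finset.sum_congr rfl fun i _ => ?_
  rw [dotProduct_sum, Finset.sum_eq_single i]
  · rw [smul_dotProduct, dotProduct_smul, hb]; simp; ring
  · intro j _ hj
    rw [smul_dotProduct, dotProduct_smul, hb, if_neg]
    · simp
    · intro h; exact hj (Subtype.ext h.symm)
  · simp

/-- product of endpoint values -/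
noncomputable def edgeW {N : ℕ} (f : Fin N → ℝ) : Sym2 (Fin N) → ℝ :=
  Sym2.lift ⟨fun u v => f u * f v, fun _ _ => mul_comm _ _⟩

/-- ground state transform -/
theorem ground_state {N : ℕ} (T : SimpleGraph (Fin N)) [DecidableRel T.Adj] (d : Fin N → ℝ)
    (f : Fin N → ℝ) (l : ℝ) (hf0 : ∀ v, f v ≠ 0)
    (h : (schrodOp T d) *ᵥ f = l • f) (x : Fin N → ℝ) :
    2 * (x ⬝ᵥ (schrodOp T d *ᵥ x - l • x)) =
      ∑ u, ∑ v, (if T.Adj u v then f u * f v * (x u / f u - x v / f v) ^ 2 else 0) := by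
  have hmul : ∀ (z : Fin N → ℝ) u, (schrodOp T d *ᵥ z) u
      = d u * z u - ∑ v, (if T.Adj u v then z v else 0) := by
    intro z u
    simp [schrodOp, Matrix.mulVec, dotProduct, sub_mul, Finset.sum_sub_distrib,
      SimpleGraph.adjMatrix_apply, Matrix.diagonal_apply]
  have hd : ∀ u, (d u - l) * f u = ∑ v, (if T.Adj u v then f v else 0) := by
    intro u
    have := congrFun h u
    rw [hmul] at this
    simp only [Pi.smul_apply, smul_eq_mul] at this
    linarith
  have e1 : x ⬝ᵥ (schrodOp T d *ᵥ x - l • x)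
      = ∑ u, ∑ v, (if T.Adj u v then f u * f v * ((x u / f u) ^ 2 - (x u / f u) * (x v / f v))
          else 0) := by
    unfold dotProduct
    refine Finset.sum_congr rfl fun u _ => ?_
    have hx : x u = x u / f u * f u := by field_simp [hf0 u]
    rw [Pi.sub_apply, hmul, Pi.smul_apply, smul_eq_mul]
    have : x u * (d u * x u - ∑ v, (if T.Adj u v then x v else 0) - l * x u)
       = (x u) ^ 2 / f u * ((d u - l) * f u) - x u * ∑ v, (if T.Adj u v then x v else 0) := by
      field_simp [hf0 u]
      ring
    rw [this, hd, Finset.mul_sum, Finset.mul_sum, ← Finset.sum_sub_distrib]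
    refine Finset.sum_congr rfl fun v _ => ?_
    split_ifs
    · have := hf0 u
      have := hf0 v
      field_simp
    · simp
  have e2 : x ⬝ᵥ (schrodOp T d *ᵥ x - l • x)
      = ∑ u, ∑ v, (if T.Adj u v then f u * f v * ((x v / f v) ^ 2 - (x u / f u) * (x v / f v))
          else 0) := by
    rw [e1, Finset.sum_comm]
    refine Finset.sum_congr rfl fun u _ => Finset.sum_congr rfl fun v _ => ?_
    simp only [T.adj_comm v u]
    split_ifs
    · ring
    · rfl
  rw [two_mul]
  nth_rewrite 1 [e1]
  rw [e2, ← Finset.sum_add_distrib]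
  refine Finset.sum_congr rfl fun u _ => ?_
  rw [← Finset.sum_add_distrib]
  refine Finset.sum_congr rfl fun v _ => ?_
  split_ifs
  · ring
  · simp

/-- differences of `x / f` along the edges in `F` -/
noncomputable def edgeDiff {N : ℕ} (f : Fin N → ℝ) (F : Finset (Sym2 (Fin N))) :
    (Fin N → ℝ) →ₗ[ℝ] (F → ℝ) where
  toFun x := fun e => x (e.1.out.1) / f (e.1.out.1) - x (e.1.out.2) / f (e.1.out.2)
  map_add' x y := by ext e; simp; ring
  map_smul' c x := by ext e; simp; ring

theorem edgeDiff_zero {N : ℕ} (f : Fin N → ℝ) (F : Finset (Sym2 (Fin N))) (x : Fin N → ℝ)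
    (h : edgeDiff f F x = 0) (u v : Fin N) (huv : s(u, v) ∈ F) : x u / f u - x v / f v = 0 := by
  have h1 : x (s(u, v).out.1) / f (s(u, v).out.1) - x (s(u, v).out.2) / f (s(u, v).out.2) = 0 :=
    congrFun h ⟨s(u, v), huv⟩
  have h2 : s(s(u, v).out.1, s(u, v).out.2) = s(u, v) := Quot.out_eq (s(u, v))
  rw [Sym2.eq_iff] at h2
  rcases h2 with ⟨a, b⟩ | ⟨a, b⟩
  · rw [a, b] at h1; exact h1
  · rw [a, b] at h1; linarith

theorem schrodOp_herm {N : ℕ} (T : SimpleGraph (Fin N)) [DecidableRel T.Adj] (d : Fin N → ℝ) :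
    (schrodOp T d).IsHermitian := by
  unfold schrodOp
  apply Matrix.IsHermitian.sub
  · exact Matrix.isHermitian_diagonal d
  · ext i j; simp [SimpleGraph.adjMatrix_apply, T.adj_comm]

theorem tree_case {N : ℕ} (T : SimpleGraph (Fin N)) [DecidableRel T.Adj] (hT : T.IsTree)
    (d f : Fin N → ℝ) (l : ℝ) (hf0 : ∀ v, f v ≠ 0) (h : (schrodOp T d) *ᵥ f = l • f) :
    sE (schrodOp T d) ((T.edgeFinset.filter (fun e => edgeW f e < 0)).card) = l := by
  have hA := schrodOp_herm T d
  have hcard := hT.card_edgeFinset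
  rw [Fintype.card_fin] at hcard
  have hsplit := Finset.card_filter_add_card_filter_not (s := T.edgeFinset)
    (fun e => edgeW f e < 0)
  set k := (T.edgeFinset.filter (fun e => edgeW f e < 0)).card with hk
  have hkN : k < N := by omega
  unfold sE sortedEigs
  rw [dif_pos hkN, dif_pos hA]
  apply sorted_eq_of_counts
  · by_contra hlt
    push Not at hlt
    obtain ⟨x, c, hc0, hL, hq⟩ := exists_test_vector hA l
      (Finset.univ.filter (fun i => hA.eigenvalues i < l))
      (edgeDiff f (T.edgeFinset.filter (fun e => edgeW f e < 0)))
      (by rw [Fintype.card_coe]; omega)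
    have hg := ground_state T d f l hf0 h x
    have hnn : 0 ≤ ∑ u, ∑ v, (if T.Adj u v then f u * f v * (x u / f u - x v / f v) ^ 2 else 0) := by
      refine Finset.sum_nonneg fun u _ => Finset.sum_nonneg fun v _ => ?_
      split_ifs with hadj
      · by_cases hw : f u * f v < 0
        · rw [edgeDiff_zero f _ x hL u v (by
            simp only [Finset.mem_filter, SimpleGraph.mem_edgeFinset, SimpleGraph.mem_edgeSet]
            exact ⟨hadj, hw⟩)]; simp
        · exact mul_nonneg (not_lt.mp hw) (sq_nonneg _)
      · exact le_rfl
    obtain ⟨i, hi⟩ := Function.ne_iff.mp hc0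
    have hneg : ∑ i : {i // i ∈ Finset.univ.filter (fun i => hA.eigenvalues i < l)},
        (hA.eigenvalues i - l) * (c i) ^ 2 < 0 := by
      apply Finset.sum_neg'
      · intro j _
        have := (Finset.mem_filter.mp j.2).2
        nlinarith [sq_nonneg (c j)]
      · refine ⟨i, Finset.mem_univ _, ?_⟩
        have := (Finset.mem_filter.mp i.2).2
        have h2 : 0 < (c i) ^ 2 := by have : c i ≠ 0 := hi
                                      positivity
        nlinarith
    linarith
  · by_contra hlt
    push Not at hlt
    obtain ⟨x, c, hc0, hL, hq⟩ := exists_test_vector hA l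
      (Finset.univ.filter (fun i => l < hA.eigenvalues i))
      (edgeDiff f (T.edgeFinset.filter (fun e => ¬ edgeW f e < 0)))
      (by rw [Fintype.card_coe]; omega)
    have hg := ground_state T d f l hf0 h x
    have hnn : ∑ u, ∑ v, (if T.Adj u v then f u * f v * (x u / f u - x v / f v) ^ 2 else 0) ≤ 0 := by
      refine Finset.sum_nonpos fun u _ => Finset.sum_nonpos fun v _ => ?_
      split_ifs with hadj
      · by_cases hw : f u * f v < 0
        · exact mul_nonpos_of_nonpos_of_nonneg hw.le (sq_nonneg _)
        · rw [edgeDiff_zero f _ x hL u v (by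
            simp only [Finset.mem_filter, SimpleGraph.mem_edgeFinset, SimpleGraph.mem_edgeSet]
            exact ⟨hadj, hw⟩)]; simp
      · exact le_rfl
    obtain ⟨i, hi⟩ := Function.ne_iff.mp hc0
    have hpos : 0 < ∑ i : {i // i ∈ Finset.univ.filter (fun i => l < hA.eigenvalues i)},
        (hA.eigenvalues i - l) * (c i) ^ 2 := by
      apply Finset.sum_pos'
      · intro j _
        have := (Finset.mem_filter.mp j.2).2
        nlinarith [sq_nonneg (c j)]
      · refine ⟨i, Finset.mem_univ _, ?_⟩
        have := (Finset.mem_filter.mp i.2).2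
        have h2 : 0 < (c i) ^ 2 := by have : c i ≠ 0 := hi
                                      positivity
        nlinarith
    linarith

theorem cut_entry_mulVec {N : ℕ} (f : Fin N → ℝ) (hf0 : ∀ v, f v ≠ 0) (u v : Fin N)
    (huv : u ≠ v) :
    (Matrix.of (fun a b : Fin N =>
    if a = u ∧ b = u then f v / f u
    else if a = v ∧ b = v then (f v / f u)⁻¹
    else if (a = u ∧ b = v) ∨ (a = v ∧ b = u) then -1
    else (0 : ℝ))) *ᵥ f = 0 := by
  have hu := hf0 u
  have hv := hf0 v
  ext a
  simp only [Matrix.mulVec, dotProduct, Matrix.of_apply, Pi.zero_apply]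
  rw [← Finset.sum_subset (Finset.subset_univ {u, v}), Finset.sum_pair huv]
  · by_cases h1 : a = u
    · subst h1; simp [huv, huv.symm]; field_simp; simp
    · by_cases h2 : a = v
      · subst h2; simp [huv, huv.symm]; field_simp; simp
      · simp [h1, h2]
  · intro b _ hb
    simp only [Finset.mem_insert, Finset.mem_singleton, not_or] at hb
    simp [hb.1, hb.2]

/-- transfer of the eigenvalue to the cut (tree) operator.  If `f` is the
eigenvector of a simple eigenvalue `λ_n(H(Γ))` (1-based `n`), nonvanishing on vertices, with
`φ` sign changes, and the edges `e_j = (uE j, vE j)` outside a spanning tree are cut with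
`γ̃_j = f_{v_j}/f_{u_j}`, of which `p` are negative, then `λ_n(H(Γ))` is the `(φ-p+1)`-th
smallest eigenvalue of the cut operator (0-based index `φ - p`). -/
theorem eigenvalue_transfer_to_cut_tree {N β : ℕ} (G : SimpleGraph (Fin N))
    [DecidableRel G.Adj] (hconn : G.Connected) (q : Fin N → ℝ)
    (uE vE : Fin β → Fin N)
    (hadj : ∀ j, G.Adj (uE j) (vE j))
    (hdistinct : ∀ i j, s(uE i, vE i) = s(uE j, vE j) → i = j)
    (htree : (G.deleteEdges {e | ∃ j, e = s(uE j, vE j)}).IsTree)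
    (hβ : β + N = G.edgeFinset.card + 1)
    (n : ℕ) (hn1 : 1 ≤ n) (hn2 : n ≤ N)
    (f : Fin N → ℝ)
    (heig : (schrodOp G q).mulVec f = sE (schrodOp G q) (n - 1) • f)
    (hsimple : Module.finrank ℝ
      (Module.End.eigenspace (Matrix.toLin' (schrodOp G q)) (sE (schrodOp G q) (n - 1))) = 1)
    (hf0 : ∀ v, f v ≠ 0)
    (φ p : ℕ) (hφ : φ = signChanges G f)
    (hp : p = {j : Fin β | f (vE j) / f (uE j) < 0}.ncard) :
    sE (schrodOp G q) (n - 1) =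
      sE (schrodCut G q uE vE (fun j => f (vE j) / f (uE j))) (φ - p) := by
  classical
  set l := sE (schrodOp G q) (n - 1) with hl
  set T := G.deleteEdges {e | ∃ j, e = s(uE j, vE j)} with hT
  set γ : Fin β → ℝ := fun j => f (vE j) / f (uE j) with hγ
  set A := schrodCut G q uE vE γ with hAdef
  have hAeq : A = schrodOp T (fun a => A a a) := by
    ext a b
    by_cases hab : a = b
    · subst hab; simp [schrodOp]
    · have hTab : T.Adj a b ↔ G.Adj a b ∧ ¬ ∃ j, s(a, b) = s(uE j, vE j) := by
        rw [hT, SimpleGraph.deleteEdges_adj]; rfl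
      have hent : ∀ j, (if a = uE j ∧ b = uE j then γ j
          else if a = vE j ∧ b = vE j then (γ j)⁻¹
          else if (a = uE j ∧ b = vE j) ∨ (a = vE j ∧ b = uE j) then -1
          else (0 : ℝ)) = if s(a, b) = s(uE j, vE j) then -1 else 0 := by
        intro j
        rw [if_neg (by rintro ⟨h1, h2⟩; exact hab (h1.trans h2.symm)),
          if_neg (by rintro ⟨h1, h2⟩; exact hab (h1.trans h2.symm))]
        simp only [Sym2.eq_iff]
      have hR : schrodOp T (fun a => A a a) a b = - (if T.Adj a b then 1 else 0) := by
        simp [schrodOp, hab, SimpleGraph.adjMatrix_apply]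
      rw [hR, hAdef]
      unfold schrodCut
      rw [Matrix.sub_apply, Matrix.sum_apply]
      simp only [Matrix.of_apply, hent]
      have hL : schrodOp G q a b = - (if G.Adj a b then 1 else 0) := by
        simp [schrodOp, hab, SimpleGraph.adjMatrix_apply]
      rw [hL]
      by_cases hj : ∃ j, s(a, b) = s(uE j, vE j)
      · obtain ⟨j, hj⟩ := hj
        rw [Finset.sum_eq_single j, if_pos hj]
        · have : G.Adj a b := by
            rw [← SimpleGraph.mem_edgeSet, hj]; exact hadj j
          have h2 : ¬ T.Adj a b := by rw [hTab]; exact fun h => h.2 ⟨j, hj⟩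
          simp [this, h2]
        · intro i _ hij
          rw [if_neg]
          intro h
          exact hij (hdistinct i j (h.symm.trans hj))
        · simp
      · rw [Finset.sum_eq_zero]
        · have : T.Adj a b ↔ G.Adj a b := by rw [hTab]; exact ⟨fun h => h.1, fun h => ⟨h, hj⟩⟩
          simp [this]
        · intro j _
          rw [if_neg (fun h => hj ⟨j, h⟩)]
  have hAf : A *ᵥ f = l • f := by
    rw [hAdef]
    unfold schrodCut
    rw [Matrix.sub_mulVec, heig, Matrix.sum_mulVec, Finset.sum_eq_zero, sub_zero]
    intro j _
    exact cut_entry_mulVec f hf0 (uE j) (vE j) (hadj j).ne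
  rw [hAeq] at hAf
  have hmain := tree_case T htree _ f l hf0 hAf
  rw [← hAeq] at hmain
  rw [← hmain]
  congr 1
  -- counting
  have hφ' : φ = (G.edgeFinset.filter (fun e => edgeW f e < 0)).card := by
    rw [hφ, signChanges, ← Set.ncard_coe_finset]
    congr 1
    ext e
    induction e with
    | _ u v =>
      simp only [Set.mem_setOf_eq, Finset.coe_filter, SimpleGraph.mem_edgeFinset]
      refine and_congr_right fun _ => ⟨fun h => h u v rfl, fun h a b hab => ?_⟩
      rw [hab] at h
      exact h
  have hp' : p = ((Finset.univ.filter (fun j => f (vE j) / f (uE j) < 0)).image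
      (fun j => s(uE j, vE j))).card := by
    rw [Finset.card_image_of_injective _ (fun i j h => hdistinct i j h), hp,
      ← Set.ncard_coe_finset]
    congr 1
    ext j; simp
  have hunion : G.edgeFinset.filter (fun e => edgeW f e < 0) =
      (T.edgeFinset.filter (fun e => edgeW f e < 0)) ∪
      ((Finset.univ.filter (fun j => f (vE j) / f (uE j) < 0)).image
      (fun j => s(uE j, vE j))) := by
    have hsgn : ∀ j, edgeW f s(uE j, vE j) < 0 ↔ f (vE j) / f (uE j) < 0 := by
      intro j
      change f (uE j) * f (vE j) < 0 ↔ _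
      rw [mul_neg_iff, div_neg_iff]
      tauto
    ext e
    simp only [Finset.mem_union, Finset.mem_filter, SimpleGraph.mem_edgeFinset, Finset.mem_image,
      Finset.mem_univ, true_and, hT, SimpleGraph.edgeSet_deleteEdges, Set.mem_diff,
      Set.mem_setOf_eq]
    constructor
    · rintro ⟨h1, h2⟩
      by_cases hj : ∃ j, e = s(uE j, vE j)
      · obtain ⟨j, rfl⟩ := hj
        exact Or.inr ⟨j, (hsgn j).1 h2, rfl⟩
      · exact Or.inl ⟨⟨h1, hj⟩, h2⟩
    · rintro (⟨⟨h1, -⟩, h2⟩ | ⟨j, hj, rfl⟩)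
      · exact ⟨h1, h2⟩
      · exact ⟨hadj j, (hsgn j).2 hj⟩
  have hdisj : Disjoint (T.edgeFinset.filter (fun e => edgeW f e < 0))
      ((Finset.univ.filter (fun j => f (vE j) / f (uE j) < 0)).image
      (fun j => s(uE j, vE j))) := by
    rw [Finset.disjoint_left]
    intro e he he2
    simp only [Finset.mem_filter, SimpleGraph.mem_edgeFinset, hT, SimpleGraph.edgeSet_deleteEdges,
      Set.mem_diff, Set.mem_setOf_eq] at he
    obtain ⟨j, -, hj⟩ := Finset.mem_image.mp he2
    exact he.1.2 ⟨j, hj.symm⟩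
  rw [hφ', hp', hunion, Finset.card_union_of_disjoint hdisj]
  simp
end

section
/- Let Γ = (V,E) be a simple finite connected graph, q : V → ℝ a potential, and H(Γ) = Q − C the discrete Schrödinger operator, where Q = diag(q) and C is the adjacency matrix of Γ. Let β = |E| − |V| + 1, fix a spanning tree of Γ, and let S = {e_1, …, e_β} be the edges not in the tree, with e_j = (u_j, v_j). Suppose f is an eigenvector of H(Γ) corresponding to a simple eigenvalue λ_n(H(Γ)) and f is nonzero at every vertex. Let φ be the number of edges (u,v) ∈ E with f_u f_v < 0, set γ̃_j = f_{v_j}/f_{u_j}, and let p = #{j : γ̃_j < 0}. For γ = (γ_1,…,γ_β) with all γ_j nonzero, let H(Γ^cut_γ) be the matrix obtained from H(Γ) by, for each j, setting the (u_j,v_j) and (v_j,u_j) entries to 0 and replacing the diagonal entries q_{u_j}, q_{v_j} by q_{u_j} − γ_j and q_{v_j} − 1/γ_j. Then the function γ ↦ λ_{φ−p+1}(H(Γ^cut_γ)) is differentiable in a neighborhood of (γ̃_1,…,γ̃_β) and (γ̃_1,…,γ̃_β) is a critical point of it: all its partial derivatives ∂λ_{φ−p+1}/∂γ_j vanish there.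 -/
open Matrix

lemma sE_lt {N : ℕ} (M : Matrix (Fin N) (Fin N) ℝ) (hM : M.IsHermitian) (i : Fin N) :
    sE M i = hM.eigenvalues (Tuple.sort hM.eigenvalues i) := by
  rw [sE, dif_pos i.isLt, sortedEigs, dif_pos hM]; rfl

lemma exists_eig_basis {N : ℕ} (M : Matrix (Fin N) (Fin N) ℝ) (hM : M.IsHermitian) :
    ∃ v : Fin N → Fin N → ℝ, (∀ i j, v i ⬝ᵥ v j = if i = j then 1 else 0) ∧
      (∀ i : Fin N, M *ᵥ v i = sE M i • v i) ∧
      (∀ x y : Fin N → ℝ, x ⬝ᵥ y = ∑ i, (v i ⬝ᵥ x) * (v i ⬝ᵥ y)) ∧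
      (∀ i j : Fin N, i ≤ j → sE M i ≤ sE M j) ∧
      (∀ x : Fin N → ℝ, x ⬝ᵥ (M *ᵥ x) = ∑ i : Fin N, sE M i * (v i ⬝ᵥ x) ^ 2) := by
  set σ := Tuple.sort hM.eigenvalues with hσ
  have h3 : ∀ x y : Fin N → ℝ, x ⬝ᵥ y = ∑ i, ((hM.eigenvectorBasis (σ i)).ofLp ⬝ᵥ x) *
      ((hM.eigenvectorBasis (σ i)).ofLp ⬝ᵥ y) := by
    intro x y
    have := hM.eigenvectorBasis.sum_inner_mul_inner (WithLp.toLp 2 x) (WithLp.toLp 2 y)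
    rw [← Equiv.sum_comp σ] at this
    simp only [EuclideanSpace.inner_eq_star_dotProduct, star_trivial] at this
    rw [dotProduct_comm x y, ← this]
    refine Finset.sum_congr rfl fun i _ => ?_
    rw [dotProduct_comm y]
  have h2 : ∀ i : Fin N, M *ᵥ (hM.eigenvectorBasis (σ i)).ofLp
      = sE M i • (hM.eigenvectorBasis (σ i)).ofLp := by
    intro i
    rw [sE_lt M hM]
    exact hM.mulVec_eigenvectorBasis _
  refine ⟨fun i => (hM.eigenvectorBasis (σ i)).ofLp, ?_, h2, h3, ?_, ?_⟩
  · intro i j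
    have := hM.eigenvectorBasis.orthonormal
    rw [orthonormal_iff_ite] at this
    have := this (σ j) (σ i)
    simp only [EuclideanSpace.inner_eq_star_dotProduct, star_trivial] at this
    rw [this]
    simp [eq_comm]
  · intro i j hij
    rw [sE_lt M hM, sE_lt M hM]
    exact Tuple.monotone_sort hM.eigenvalues hij
  · intro x
    rw [h3]
    refine Finset.sum_congr rfl fun i _ => ?_
    have : (hM.eigenvectorBasis (σ i)).ofLp ⬝ᵥ (M *ᵥ x) =
        sE M i * ((hM.eigenvectorBasis (σ i)).ofLp ⬝ᵥ x) := by
      rw [dotProduct_mulVec, ← mulVec_transpose]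
      have hT : Mᵀ = M := by rw [← Matrix.conjTranspose_eq_transpose_of_trivial]; exact hM
      rw [hT, h2, smul_dotProduct, smul_eq_mul]
    rw [this]; ring

lemma dot_pos {N : ℕ} {x : Fin N → ℝ} (hx : x ≠ 0) : 0 < x ⬝ᵥ x := by
  have h0 : 0 ≤ x ⬝ᵥ x := Finset.sum_nonneg fun i _ => mul_self_nonneg _
  exact lt_of_le_of_ne h0 fun h => hx (dotProduct_self_eq_zero.1 h.symm)

/-- Common zero of few functionals. -/
lemma exists_ker {N : ℕ} {ι κ : Type*} [Fintype ι] [Fintype κ]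
    (L : (Fin N → ℝ) →ₗ[ℝ] (ι → ℝ)) (w : κ → Fin N → ℝ)
    (h : Fintype.card ι + Fintype.card κ < N) :
    ∃ x : Fin N → ℝ, x ≠ 0 ∧ L x = 0 ∧ ∀ k, w k ⬝ᵥ x = 0 := by
  let P : (Fin N → ℝ) →ₗ[ℝ] (κ → ℝ) := Matrix.mulVecLin (Matrix.of w)
  have : LinearMap.ker (L.prod P) ≠ ⊥ := by
    apply LinearMap.ker_ne_bot_of_finrank_lt
    simpa using h
  obtain ⟨x, hx, hx0⟩ := Submodule.exists_mem_ne_zero_of_ne_bot this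
  have hx' : (L x, P x) = 0 := by simpa using hx
  rw [Prod.mk_eq_zero] at hx'
  refine ⟨x, hx0, hx'.1, fun k => ?_⟩
  exact congrFun hx'.2 k

lemma minmax_lo {N : ℕ} (M : Matrix (Fin N) (Fin N) ℝ) (hM : M.IsHermitian) {ι : Type*} [Fintype ι]
    (L : (Fin N → ℝ) →ₗ[ℝ] (ι → ℝ)) (k : ℕ) (h : Fintype.card ι + k < N) :
    ∃ x : Fin N → ℝ, x ≠ 0 ∧ L x = 0 ∧ sE M k * (x ⬝ᵥ x) ≤ x ⬝ᵥ (M *ᵥ x) := by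
  obtain ⟨v, -, -, h3, h4, h5⟩ := exists_eig_basis M hM
  obtain ⟨x, hx0, hL, hx⟩ := exists_ker L
    (fun i : Fin k => v ⟨i, by omega⟩) (by simpa using h)
  refine ⟨x, hx0, hL, ?_⟩
  rw [h5, h3, Finset.mul_sum]
  refine Finset.sum_le_sum fun i _ => ?_
  by_cases hi : (i : ℕ) < k
  · have : v i ⬝ᵥ x = 0 := hx ⟨i, hi⟩
    simp [this]
  · have := h4 ⟨k, by omega⟩ i (by rw [Fin.le_def]; simpa using hi)
    simp only at this
    nlinarith [sq_nonneg (v i ⬝ᵥ x)]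

lemma minmax_hi {N : ℕ} (M : Matrix (Fin N) (Fin N) ℝ) (hM : M.IsHermitian) {ι : Type*} [Fintype ι]
    (L : (Fin N → ℝ) →ₗ[ℝ] (ι → ℝ)) (k : ℕ) (hk : k < N) (h : Fintype.card ι ≤ k) :
    ∃ x : Fin N → ℝ, x ≠ 0 ∧ L x = 0 ∧ x ⬝ᵥ (M *ᵥ x) ≤ sE M k * (x ⬝ᵥ x) := by
  obtain ⟨v, -, -, h3, h4, h5⟩ := exists_eig_basis M hM
  obtain ⟨x, hx0, hL, hx⟩ := exists_ker L
    (fun i : Fin (N - 1 - k) => v ⟨k + 1 + i, by omega⟩) (by simp; omega)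
  refine ⟨x, hx0, hL, ?_⟩
  rw [h5, h3, Finset.mul_sum]
  refine Finset.sum_le_sum fun i _ => ?_
  by_cases hi : k < (i : ℕ)
  · have : v i ⬝ᵥ x = 0 := by
      have := hx ⟨i - (k + 1), by omega⟩
      convert this using 3
      ext; simp; omega
    simp [this]
  · have := h4 i ⟨k, by omega⟩ (by rw [Fin.le_def]; simpa using hi)
    simp only at this
    nlinarith [sq_nonneg (v i ⬝ᵥ x)]

/-- Entrywise bound gives a bound on the bilinear form. -/
lemma bilin_bound {N : ℕ} (E : Matrix (Fin N) (Fin N) ℝ) (δ : ℝ) (hE : ∀ i j, |E i j| ≤ δ)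
    (t : ℝ) (ht : 0 < t) (x y : Fin N → ℝ) :
    2 * |x ⬝ᵥ (E *ᵥ y)| ≤ N * δ * (t * (x ⬝ᵥ x) + t⁻¹ * (y ⬝ᵥ y)) := by
  have h1 : |x ⬝ᵥ (E *ᵥ y)| ≤ ∑ i, ∑ j, |x i| * (|E i j| * |y j|) := by
    simp only [dotProduct, mulVec]
    refine (Finset.abs_sum_le_sum_abs _ _).trans (Finset.sum_le_sum fun i _ => ?_)
    rw [abs_mul, ← Finset.mul_sum]
    refine mul_le_mul_of_nonneg_left ?_ (abs_nonneg _)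
    refine (Finset.abs_sum_le_sum_abs _ _).trans (Finset.sum_le_sum fun j _ => ?_)
    rw [abs_mul]
  have h2 : ∀ i j, 2 * (|x i| * (|E i j| * |y j|)) ≤ δ * (t * (x i * x i) + t⁻¹ * (y j * y j)) := by
    intro i j
    have hδ : 0 ≤ δ := (abs_nonneg _).trans (hE i j)
    have a1 : 2 * (|x i| * |y j|) ≤ t * (x i * x i) + t⁻¹ * (y j * y j) := by
      rw [← abs_mul_abs_self (x i), ← abs_mul_abs_self (y j)]
      have := mul_nonneg (inv_nonneg.2 ht.le) (sq_nonneg (t * |x i| - |y j|))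
      have e : t⁻¹ * (t * |x i| - |y j|)^2 = t * (|x i| * |x i|) + t⁻¹ * (|y j| * |y j|) - 2 * (|x i| * |y j|) := by
        field_simp; ring
      linarith
    calc 2 * (|x i| * (|E i j| * |y j|)) = |E i j| * (2 * (|x i| * |y j|)) := by ring
      _ ≤ δ * (2 * (|x i| * |y j|)) := mul_le_mul_of_nonneg_right (hE i j) (by positivity)
      _ ≤ _ := mul_le_mul_of_nonneg_left a1 hδ
  calc 2 * |x ⬝ᵥ (E *ᵥ y)| ≤ 2 * ∑ i, ∑ j, |x i| * (|E i j| * |y j|) := by linarith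
    _ = ∑ i, ∑ j, 2 * (|x i| * (|E i j| * |y j|)) := by simp only [Finset.mul_sum]
    _ ≤ ∑ i, ∑ j, δ * (t * (x i * x i) + t⁻¹ * (y j * y j)) :=
        Finset.sum_le_sum fun i _ => Finset.sum_le_sum fun j _ => h2 i j
    _ = _ := by
      simp only [dotProduct, mul_add, Finset.sum_add_distrib, ← Finset.mul_sum, Finset.sum_const,
        Finset.card_univ, Fintype.card_fin, nsmul_eq_mul]
      have e : ∑ i, x i * ((N : ℝ) * x i) = N * ∑ i, x i * x i := by
        rw [Finset.mul_sum]; exact Finset.sum_congr rfl fun i _ => by ring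
      rw [e]
      ring

lemma quad_bound {N : ℕ} (E : Matrix (Fin N) (Fin N) ℝ) (δ : ℝ) (hE : ∀ i j, |E i j| ≤ δ)
    (x : Fin N → ℝ) : |x ⬝ᵥ (E *ᵥ x)| ≤ N * δ * (x ⬝ᵥ x) := by
  have := bilin_bound E δ hE 1 one_pos x x
  simp at this
  linarith

/-- Weyl's inequality. -/
lemma weyl {N : ℕ} (A B : Matrix (Fin N) (Fin N) ℝ) (hA : A.IsHermitian) (hB : B.IsHermitian)
    (δ : ℝ) (hE : ∀ i j, |(B - A) i j| ≤ δ) (k : ℕ) (hk : k < N) :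
    sE B k ≤ sE A k + N * δ := by
  obtain ⟨v, -, -, h3, h4, h5⟩ := exists_eig_basis A hA
  obtain ⟨x, hx0, hL, hx⟩ := minmax_lo B hB
    (Matrix.mulVecLin (Matrix.of fun i : Fin (N - 1 - k) => v ⟨k + 1 + i, by omega⟩)) k
    (by simp; omega)
  have hA : x ⬝ᵥ (A *ᵥ x) ≤ sE A k * (x ⬝ᵥ x) := by
    rw [h5, h3, Finset.mul_sum]
    refine Finset.sum_le_sum fun i _ => ?_
    by_cases hi : k < (i : ℕ)
    · have : v i ⬝ᵥ x = 0 := by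
        have := congrFun hL ⟨i - (k + 1), by omega⟩
        simp only [mulVecLin_apply, mulVec, of_apply, Pi.zero_apply] at this
        have e : (⟨k + 1 + (i - (k + 1)), by omega⟩ : Fin N) = i := by ext; simp; omega
        rw [e] at this
        exact this
      simp [this]
    · have := h4 i ⟨k, by omega⟩ (by rw [Fin.le_def]; simpa using hi)
      simp only at this
      nlinarith [sq_nonneg (v i ⬝ᵥ x)]
  have hq := (abs_le.1 (quad_bound (B - A) δ hE x)).2
  rw [sub_mulVec, dotProduct_sub] at hq
  have hp := dot_pos hx0
  by_contra hc
  push Not at hc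
  nlinarith

lemma perturb {N : ℕ} (A : Matrix (Fin N) (Fin N) ℝ) (hA : A.IsHermitian) (k : ℕ) (hk : k < N)
    (g : ℝ) (hg : 0 < g) (hlo : ∀ i, i < k → sE A i ≤ sE A k - g)
    (hhi : ∀ i, k < i → i < N → sE A k + g ≤ sE A i) :
    ∃ w : Fin N → ℝ, w ⬝ᵥ w = 1 ∧
      (∀ f : Fin N → ℝ, A *ᵥ f = sE A k • f → ∃ c : ℝ, f = c • w) ∧
      ∀ (B : Matrix (Fin N) (Fin N) ℝ), B.IsHermitian → ∀ δ : ℝ, (∀ i j, |(B - A) i j| ≤ δ) →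
        N * δ ≤ g / 4 → |sE B k - w ⬝ᵥ (B *ᵥ w)| ≤ 2 * N ^ 2 / g * δ ^ 2 := by
  obtain ⟨v, h1, h2, h3, h4, h5⟩ := exists_eig_basis A hA
  have hsymm : ∀ (E : Matrix (Fin N) (Fin N) ℝ), E.IsHermitian → ∀ x y : Fin N → ℝ,
      x ⬝ᵥ (E *ᵥ y) = y ⬝ᵥ (E *ᵥ x) := by
    intro E hE x y
    have hT : Eᵀ = E := by rw [← Matrix.conjTranspose_eq_transpose_of_trivial]; exact hE
    rw [dotProduct_mulVec, ← mulVec_transpose, hT, dotProduct_comm]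
  set w := v ⟨k, hk⟩ with hw
  have hww : w ⬝ᵥ w = 1 := by simp [hw, h1]
  have hAw : A *ᵥ w = sE A k • w := h2 ⟨k, hk⟩
  refine ⟨w, hww, ?_, ?_⟩
  · intro f hf
    refine ⟨w ⬝ᵥ f, ?_⟩
    rw [← sub_eq_zero, ← dotProduct_self_eq_zero, h3]
    refine Finset.sum_eq_zero fun i _ => ?_
    have : v i ⬝ᵥ (f - (w ⬝ᵥ f) • w) = 0 := by
      rw [dotProduct_sub, dotProduct_smul, smul_eq_mul, hw, h1]
      by_cases hi : i = ⟨k, hk⟩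
      · subst hi; simp
      · have e1 := hsymm A hA (v i) f
        rw [hf, h2, dotProduct_smul, dotProduct_smul, smul_eq_mul, smul_eq_mul,
          dotProduct_comm f] at e1
        have hne : sE A k ≠ sE A i := by
          have hik : (i : ℕ) ≠ k := fun h => hi (Fin.ext h)
          rcases lt_or_gt_of_ne hik with h | h
          · have := hlo i h; linarith
          · have := hhi i h i.2; linarith
        have : v i ⬝ᵥ f = 0 := by
          by_contra h0
          exact hne (mul_right_cancel₀ h0 e1)
        simp [this, hi]
    rw [this, zero_mul]
  intro B hB δ hE hδ
  have hNpos : (0 : ℝ) < N := by exact_mod_cast (by omega : 0 < N)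
  have hδ0 : 0 ≤ δ := (abs_nonneg _).trans (hE ⟨k, hk⟩ ⟨k, hk⟩)
  rcases hδ0.eq_or_lt with hz | hδp
  · have : B = A := by
      ext i j
      have := hE i j
      rw [← hz] at this
      have := abs_nonpos_iff.1 this
      rw [Matrix.sub_apply] at this
      linarith
    rw [this, hAw, dotProduct_smul, hww]
    simp; positivity
  -- decomposition
  have key : ∀ x : Fin N → ℝ, ∃ (a : ℝ) (y : Fin N → ℝ), x ⬝ᵥ x = a ^ 2 + y ⬝ᵥ y ∧
      (∀ i : Fin N, (i : ℕ) ≠ k → v i ⬝ᵥ y = v i ⬝ᵥ x) ∧ w ⬝ᵥ y = 0 ∧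
      x ⬝ᵥ (B *ᵥ x) = a ^ 2 * (w ⬝ᵥ (B *ᵥ w)) + y ⬝ᵥ (A *ᵥ y) +
        2 * ((a • w) ⬝ᵥ ((B - A) *ᵥ y)) + y ⬝ᵥ ((B - A) *ᵥ y) := by
    intro x
    have hwy : w ⬝ᵥ (x - (w ⬝ᵥ x) • w) = 0 := by
      rw [dotProduct_sub, dotProduct_smul, hww]; simp
    refine ⟨w ⬝ᵥ x, x - (w ⬝ᵥ x) • w, ?_, ?_, hwy, ?_⟩
    · simp only [dotProduct_sub, sub_dotProduct, dotProduct_smul, smul_dotProduct, smul_eq_mul,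
        hww, dotProduct_comm x w]
      ring
    · intro i hi
      have : i ≠ ⟨k, hk⟩ := fun h => hi (by rw [h])
      rw [dotProduct_sub, dotProduct_smul, hw, h1]; simp [this]
    · set a := w ⬝ᵥ x
      set y := x - a • w with hy
      have hx : x = a • w + y := by rw [hy]; abel
      have e1 : w ⬝ᵥ (A *ᵥ y) = 0 := by
        rw [hsymm A hA, hAw, dotProduct_smul, dotProduct_comm, hwy]; simp
      have e2 := hsymm B hB y w
      rw [hx]
      simp only [mulVec_add, dotProduct_add, add_dotProduct, mulVec_smul, dotProduct_smul,
        smul_dotProduct, smul_eq_mul, sub_mulVec, dotProduct_sub, e1, e2]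
      ring
  set t : ℝ := 2 * N * δ / g with ht
  have htp : 0 < t := by positivity
  have hC : (N : ℝ) * δ * t = 2 * N ^ 2 / g * δ ^ 2 := by rw [ht]; field_simp
  have hC2 : (N : ℝ) * δ * t⁻¹ = g / 2 := by rw [ht]; field_simp
  have cross : ∀ (a : ℝ) (y : Fin N → ℝ), |2 * ((a • w) ⬝ᵥ ((B - A) *ᵥ y))| ≤
      2 * N ^ 2 / g * δ ^ 2 * a ^ 2 + g / 2 * (y ⬝ᵥ y) := by
    intro a y
    have := bilin_bound (B - A) δ hE t htp (a • w) y
    rw [abs_mul, abs_two]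
    refine this.trans (le_of_eq ?_)
    rw [mul_add, ← mul_assoc, ← mul_assoc, hC, hC2, smul_dotProduct, dotProduct_smul, hww]
    simp only [smul_eq_mul, mul_one]; ring
  have hwE : |w ⬝ᵥ (B *ᵥ w) - sE A k| ≤ g / 4 := by
    have := quad_bound (B - A) δ hE w
    rw [hww, mul_one, sub_mulVec, dotProduct_sub, hAw, dotProduct_smul, hww, smul_eq_mul,
      mul_one] at this
    linarith
  have hyE : ∀ y : Fin N → ℝ, |y ⬝ᵥ ((B - A) *ᵥ y)| ≤ g / 4 * (y ⬝ᵥ y) := by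
    intro y
    refine (quad_bound (B - A) δ hE y).trans ?_
    exact mul_le_mul_of_nonneg_right hδ (Finset.sum_nonneg fun i _ => mul_self_nonneg _)
  have hCn : 0 ≤ 2 * (N : ℝ) ^ 2 / g * δ ^ 2 := by positivity
  rw [abs_le] at hwE ⊢
  constructor
  · obtain ⟨x, hx0, hL, hx⟩ := minmax_hi B hB
      (Matrix.mulVecLin (Matrix.of fun i : Fin k => v ⟨i, by omega⟩)) k hk (by simp)
    obtain ⟨a, y, hxx, hvy, hwy, hxB⟩ := key x
    have hyA : (sE A k + g) * (y ⬝ᵥ y) ≤ y ⬝ᵥ (A *ᵥ y) := by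
      rw [h5, h3, Finset.mul_sum]
      refine Finset.sum_le_sum fun i _ => ?_
      rcases lt_trichotomy (i : ℕ) k with hi | hi | hi
      · have : v i ⬝ᵥ x = 0 := congrFun hL ⟨i, hi⟩
        rw [hvy i hi.ne, this]; simp
      · have : v i ⬝ᵥ y = 0 := by
          have e : i = ⟨k, hk⟩ := Fin.ext hi
          rw [e]; exact hwy
        rw [this]; simp
      · have := hhi i hi i.2
        nlinarith [sq_nonneg (v i ⬝ᵥ y)]
    have hp := dot_pos hx0
    have c1 := (abs_le.1 (cross a y)).1
    have c2 := (abs_le.1 (hyE y)).1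
    have hyy : 0 ≤ y ⬝ᵥ y := Finset.sum_nonneg fun i _ => mul_self_nonneg _
    by_contra hc
    push Not at hc
    set C := 2 * (N : ℝ) ^ 2 / g * δ ^ 2
    have hc' : sE B k < w ⬝ᵥ (B *ᵥ w) - C := by linarith
    have := mul_lt_mul_of_pos_right hc' hp
    rw [hxx] at this hx
    nlinarith [mul_le_mul_of_nonneg_right hwE.2 hyy, mul_nonneg hCn hyy]
  · obtain ⟨x, hx0, hL, hx⟩ := minmax_lo B hB
      (Matrix.mulVecLin (Matrix.of fun i : Fin (N - 1 - k) => v ⟨k + 1 + i, by omega⟩)) k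
      (by simp; omega)
    obtain ⟨a, y, hxx, hvy, hwy, hxB⟩ := key x
    have hyA : y ⬝ᵥ (A *ᵥ y) ≤ (sE A k - g) * (y ⬝ᵥ y) := by
      rw [h5, h3, Finset.mul_sum]
      refine Finset.sum_le_sum fun i _ => ?_
      rcases lt_trichotomy (i : ℕ) k with hi | hi | hi
      · have := hlo i hi
        nlinarith [sq_nonneg (v i ⬝ᵥ y)]
      · have : v i ⬝ᵥ y = 0 := by
          have e : i = ⟨k, hk⟩ := Fin.ext hi
          rw [e]; exact hwy
        rw [this]; simp
      · have : v i ⬝ᵥ x = 0 := by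
          have := congrFun hL ⟨i - (k + 1), by omega⟩
          simp only [mulVecLin_apply, mulVec, of_apply, Pi.zero_apply] at this
          have e : (⟨k + 1 + (i - (k + 1)), by omega⟩ : Fin N) = i := by ext; simp; omega
          rw [e] at this
          exact this
        rw [hvy i hi.ne', this]; simp
    have hp := dot_pos hx0
    have c1 := (abs_le.1 (cross a y)).2
    have c2 := (abs_le.1 (hyE y)).2
    have hyy : 0 ≤ y ⬝ᵥ y := Finset.sum_nonneg fun i _ => mul_self_nonneg _
    by_contra hc
    push Not at hc
    set C := 2 * (N : ℝ) ^ 2 / g * δ ^ 2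
    have hc' : w ⬝ᵥ (B *ᵥ w) + C < sE B k := by linarith
    have := mul_lt_mul_of_pos_right hc' hp
    rw [hxx] at this hx
    nlinarith [mul_le_mul_of_nonneg_right hwE.1 hyy, mul_nonneg hCn hyy]

lemma sE_continuousAt {N : ℕ} {X : Type*} [TopologicalSpace X] (A : X → Matrix (Fin N) (Fin N) ℝ)
    (hA : ∀ x, (A x).IsHermitian) (x₀ : X)
    (hc : ContinuousAt (fun x => (fun i j => A x i j : Fin N → Fin N → ℝ)) x₀) (i : ℕ) (hi : i < N) :
    ContinuousAt (fun x => sE (A x) i) x₀ := by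
  set a : X → Fin N → Fin N → ℝ := fun x => (fun i j => A x i j) with ha
  have h0 : Filter.Tendsto (fun x => (N : ℝ) * ‖a x - a x₀‖) (nhds x₀) (nhds 0) := by
    have h1 := (tendsto_iff_norm_sub_tendsto_zero.1 hc).const_mul (N : ℝ)
    simpa using h1
  rw [ContinuousAt, tendsto_iff_norm_sub_tendsto_zero]
  refine squeeze_zero (fun _ => norm_nonneg _) (fun x => ?_) h0
  have e : ∀ p q, |(A x - A x₀) p q| ≤ ‖a x - a x₀‖ := fun p q =>
    (norm_le_pi_norm ((a x - a x₀) p) q).trans (norm_le_pi_norm (a x - a x₀) p)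
  have e' : ∀ p q, |(A x₀ - A x) p q| ≤ ‖a x - a x₀‖ := fun p q => by
    rw [← neg_sub, neg_apply, abs_neg]; exact e p q
  have := weyl _ _ (hA x₀) (hA x) _ e i hi
  have := weyl _ _ (hA x) (hA x₀) _ e' i hi
  rw [Real.norm_eq_abs, abs_le]
  constructor <;> linarith

lemma sE_hasFDerivAt {N : ℕ} {X : Type*} [NormedAddCommGroup X] [NormedSpace ℝ X]
    (A : X → Matrix (Fin N) (Fin N) ℝ)
    (hA : ∀ x, (A x).IsHermitian) (x₀ : X)
    (hd : DifferentiableAt ℝ (fun x => (fun i j => A x i j : Fin N → Fin N → ℝ)) x₀)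
    (k : ℕ) (hk : k < N) (hlo : ∀ i, i < k → sE (A x₀) i < sE (A x₀) k)
    (hhi : ∀ i, k < i → i < N → sE (A x₀) k < sE (A x₀) i) :
    ∃ w : Fin N → ℝ, w ⬝ᵥ w = 1 ∧
      (∀ f : Fin N → ℝ, A x₀ *ᵥ f = sE (A x₀) k • f → ∃ c : ℝ, f = c • w) ∧
      HasFDerivAt (fun x => sE (A x) k - w ⬝ᵥ (A x *ᵥ w)) (0 : X →L[ℝ] ℝ) x₀ := by
  obtain ⟨g, hg, hlo', hhi'⟩ : ∃ g : ℝ, 0 < g ∧ (∀ i, i < k → sE (A x₀) i ≤ sE (A x₀) k - g) ∧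
      (∀ i, k < i → i < N → sE (A x₀) k + g ≤ sE (A x₀) i) := by
    have h1 : ∀ᶠ g : ℝ in nhdsWithin 0 (Set.Ioi 0), ∀ i : Fin N,
        ((i : ℕ) < k → sE (A x₀) i ≤ sE (A x₀) k - g) ∧
        (k < i → sE (A x₀) k + g ≤ sE (A x₀) i) := by
      rw [Filter.eventually_all]
      intro i
      refine Filter.Eventually.and ?_ ?_
      · by_cases h : (i : ℕ) < k
        · have := Ioo_mem_nhdsGT (sub_pos.2 (hlo i h))
          filter_upwards [this] with g hg _
          linarith [hg.2]
        · exact Filter.Eventually.of_forall fun _ h' => absurd h' h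
      · by_cases h : k < (i : ℕ)
        · have := Ioo_mem_nhdsGT (sub_pos.2 (hhi i h i.2))
          filter_upwards [this] with g hg _
          linarith [hg.2]
        · exact Filter.Eventually.of_forall fun _ h' => absurd h' h
    obtain ⟨g, hg, hg'⟩ := (h1.and self_mem_nhdsWithin).exists
    exact ⟨g, hg', fun i hi => (hg ⟨i, by omega⟩).1 hi, fun i hi hi' => (hg ⟨i, hi'⟩).2 hi⟩
  obtain ⟨w, hw, hw2, hw3⟩ := perturb (A x₀) (hA x₀) k hk g hg hlo' hhi'
  refine ⟨w, hw, hw2, ?_⟩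
  set a : X → Fin N → Fin N → ℝ := fun x => (fun i j => A x i j) with ha
  have hO := hd.isBigO_sub
  have h0 : Filter.Tendsto (fun x => (N : ℝ) * ‖a x - a x₀‖) (nhds x₀) (nhds 0) := by
    have h1 := (tendsto_iff_norm_sub_tendsto_zero.1 hd.continuousAt).const_mul (N : ℝ)
    simpa using h1
  have hev : ∀ᶠ x in nhds x₀, (N : ℝ) * ‖a x - a x₀‖ ≤ g / 4 :=
    (h0.eventually (gt_mem_nhds (by positivity : (0:ℝ) < g / 4))).mono fun _ h => le_of_lt h
  have hO2 : (fun x => sE (A x) k - w ⬝ᵥ (A x *ᵥ w)) =O[nhds x₀] fun x => ‖x - x₀‖ ^ 2 := by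
    have h1 : (fun x => sE (A x) k - w ⬝ᵥ (A x *ᵥ w)) =O[nhds x₀] fun x => ‖a x - a x₀‖ ^ 2 := by
      refine Asymptotics.IsBigO.of_bound (2 * N ^ 2 / g) ?_
      filter_upwards [hev] with x hx
      have e : ∀ p q, |(A x - A x₀) p q| ≤ ‖a x - a x₀‖ := fun p q =>
        (norm_le_pi_norm ((a x - a x₀) p) q).trans (norm_le_pi_norm (a x - a x₀) p)
      have := hw3 (A x) (hA x) _ e hx
      rw [Real.norm_eq_abs, Real.norm_of_nonneg (by positivity)]
      exact this
    exact h1.trans (hO.norm_norm.pow 2)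
  exact hO2.hasFDerivAt one_lt_two

lemma exists_edge_map {N : ℕ} (f : Fin N → ℝ) (r : Fin N)
    (S : Set (Sym2 (Fin N))) :
    ∃ L : (Fin N → ℝ) →ₗ[ℝ] (Option S → ℝ), ∀ x, L x = 0 →
      x r = 0 ∧ ∀ u v, s(u, v) ∈ S → x u / f u = x v / f v := by
  let ℓ : Option S → ((Fin N → ℝ) →ₗ[ℝ] ℝ) := fun o => match o with
    | none => LinearMap.proj r
    | some e => (f (Quot.out e.1).1)⁻¹ • LinearMap.proj (Quot.out e.1).1
        - (f (Quot.out e.1).2)⁻¹ • LinearMap.proj (Quot.out e.1).2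
  refine ⟨LinearMap.pi ℓ, fun x hx => ⟨congrFun hx none, fun u v huv => ?_⟩⟩
  have h1 : ℓ (some ⟨s(u, v), huv⟩) x = 0 := congrFun hx (some ⟨s(u, v), huv⟩)
  simp only [ℓ, LinearMap.sub_apply, LinearMap.smul_apply, LinearMap.proj_apply,
    smul_eq_mul] at h1
  have h2 : s((Quot.out s(u, v)).1, (Quot.out s(u, v)).2) = s(u, v) := Quot.out_eq _
  rw [Sym2.eq_iff] at h2
  rcases h2 with ⟨e1, e2⟩ | ⟨e1, e2⟩ <;> rw [e1, e2] at h1 <;>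
    simp only [div_eq_inv_mul] <;> linarith

lemma strict_form {N : ℕ} (T : SimpleGraph (Fin N)) (hT : T.Connected) (c : Fin N → Fin N → ℝ)
    (hc1 : ∀ u v, T.Adj u v → c u v = 1) (hc0 : ∀ u v, ¬ T.Adj u v → c u v = 0)
    (K : Fin N → Fin N → ℝ) (y : Fin N → ℝ) (r : Fin N) (hr : y r = 0) (hy : y ≠ 0)
    (hK : ∀ u v, T.Adj u v → y u = y v ∨ 0 < K u v) :
    0 < ∑ u, ∑ v, c u v * K u v * (y u - y v) ^ 2 := by
  have hnn : ∀ u v, 0 ≤ c u v * K u v * (y u - y v) ^ 2 := by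
    intro u v
    by_cases h : T.Adj u v
    · rcases hK u v h with h' | h'
      · simp [h']
      · rw [hc1 u v h]; positivity
    · simp [hc0 u v h]
  refine lt_of_le_of_ne (Finset.sum_nonneg fun u _ => Finset.sum_nonneg fun v _ => hnn u v) ?_
  intro h0
  have hz : ∀ u v, c u v * K u v * (y u - y v) ^ 2 = 0 := by
    intro u v
    have h1 := (Finset.sum_eq_zero_iff_of_nonneg
      (fun u _ => Finset.sum_nonneg fun v _ => hnn u v)).1 h0.symm u (Finset.mem_univ _)
    exact (Finset.sum_eq_zero_iff_of_nonneg (fun v _ => hnn u v)).1 h1 v (Finset.mem_univ _)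
  have hadj : ∀ u v, T.Adj u v → y u = y v := by
    intro u v h
    rcases hK u v h with h' | h'
    · exact h'
    · have := hz u v
      rw [hc1 u v h, one_mul] at this
      have := (mul_eq_zero.1 this).resolve_left h'.ne'
      have := pow_eq_zero_iff (two_ne_zero) |>.1 this
      linarith
  apply hy
  funext v
  obtain ⟨p⟩ := hT.preconnected r v
  have : ∀ a b, T.Walk a b → y a = y b := by
    intro a b p
    induction p with
    | nil => rfl
    | cons h _ ih => exact (hadj _ _ h).trans ih
  rw [← this r v p, hr]; rfl

lemma ground_state_s12 {N : ℕ} (c : Fin N → Fin N → ℝ) (hc : ∀ u v, c u v = c v u)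
    (A : Matrix (Fin N) (Fin N) ℝ) (hA : ∀ u v, u ≠ v → A u v = - c u v) (hd : ∀ u, c u u = 0)
    (f : Fin N → ℝ) (hf0 : ∀ v, f v ≠ 0) (lam : ℝ) (hf : A *ᵥ f = lam • f) (x : Fin N → ℝ) :
    2 * (x ⬝ᵥ (A *ᵥ x) - lam * (x ⬝ᵥ x)) =
      ∑ u, ∑ v, c u v * (f u * f v) * (x u / f u - x v / f v) ^ 2 := by
  have hAx : ∀ (z : Fin N → ℝ) u, (A *ᵥ z) u = A u u * z u - ∑ v, c u v * z v := by
    intro z u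
    have : ∀ v, A u v * z v = (if u = v then A u u * z u else 0) - c u v * z v := by
      intro v
      by_cases h : u = v
      · subst h; simp [hd]
      · simp [h, hA u v h]
    simp only [mulVec, dotProduct]
    rw [Finset.sum_congr rfl fun v _ => this v, Finset.sum_sub_distrib]
    simp
  obtain ⟨y, hy⟩ : ∃ y : Fin N → ℝ, ∀ u, x u = f u * y u :=
    ⟨fun u => x u / f u, fun u => by field_simp [hf0 u]⟩
  have hyx : ∀ u, x u / f u = y u := fun u => by rw [hy, mul_div_cancel_left₀ _ (hf0 u)]
  simp only [hyx]
  have h1 : x ⬝ᵥ (A *ᵥ x) - lam * (x ⬝ᵥ x) =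
      ∑ u, ∑ v, c u v * (f u * f v) * (y u ^ 2 - y u * y v) := by
    simp only [dotProduct]
    rw [Finset.mul_sum, ← Finset.sum_sub_distrib]
    refine Finset.sum_congr rfl fun u _ => ?_
    have hu : A u u * f u - ∑ v, c u v * f v = lam * f u := by
      rw [← hAx, hf]; simp
    have e : ∑ v, c u v * (f u * f v) * (y u ^ 2 - y u * y v) =
        f u * y u ^ 2 * (∑ v, c u v * f v) - f u * y u * ∑ v, c u v * x v := by
      rw [Finset.mul_sum, Finset.mul_sum, ← Finset.sum_sub_distrib]
      refine Finset.sum_congr rfl fun v _ => ?_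
      rw [hy v]; ring
    rw [e, hAx, hy u]
    linear_combination (f u * y u ^ 2) * hu
  have h2 : ∑ u, ∑ v, c u v * (f u * f v) * (y u ^ 2 - y u * y v) =
      ∑ u, ∑ v, c u v * (f u * f v) * (y v ^ 2 - y u * y v) := by
    rw [Finset.sum_comm]
    refine Finset.sum_congr rfl fun u _ => Finset.sum_congr rfl fun v _ => ?_
    rw [hc v u]; ring
  have h3 : ∑ u, ∑ v, c u v * (f u * f v) * (y u - y v) ^ 2 =
      ∑ u, ∑ v, c u v * (f u * f v) * (y u ^ 2 - y u * y v) +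
      ∑ u, ∑ v, c u v * (f u * f v) * (y v ^ 2 - y u * y v) := by
    rw [← Finset.sum_add_distrib]
    refine Finset.sum_congr rfl fun u _ => ?_
    rw [← Finset.sum_add_distrib]
    refine Finset.sum_congr rfl fun v _ => ?_
    ring
  rw [h3, ← h2, ← h1]
  ring

lemma fiedler {N : ℕ} (T : SimpleGraph (Fin N)) (hT : T.IsTree)
    (A : Matrix (Fin N) (Fin N) ℝ) (hH : A.IsHermitian)
    (hA1 : ∀ u v, T.Adj u v → A u v = -1) (hA0 : ∀ u v, u ≠ v → ¬ T.Adj u v → A u v = 0)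
    (f : Fin N → ℝ) (hf0 : ∀ v, f v ≠ 0) (lam : ℝ) (hf : A *ᵥ f = lam • f)
    (m : ℕ) (hm : m = {e : Sym2 (Fin N) | e ∈ T.edgeSet ∧
      ∀ u v : Fin N, e = s(u, v) → f u * f v < 0}.ncard) :
    m < N ∧ sE A m = lam ∧ (∀ i, i < m → sE A i < lam) ∧
      (∀ i, m < i → i < N → lam < sE A i) := by
  classical
  obtain ⟨r⟩ := hT.connected.nonempty
  set P : Sym2 (Fin N) → Prop := fun e => ∀ u v : Fin N, e = s(u, v) → f u * f v < 0 with hP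
  have hPiff : ∀ u v, P s(u, v) ↔ f u * f v < 0 := by
    intro u v
    refine ⟨fun h => h u v rfl, fun h a b hab => ?_⟩
    rcases Sym2.eq_iff.1 hab with ⟨rfl, rfl⟩ | ⟨rfl, rfl⟩
    · exact h
    · rw [mul_comm]; exact h
  set c : Fin N → Fin N → ℝ := fun u v => if T.Adj u v then 1 else 0 with hc
  have hc1 : ∀ u v, T.Adj u v → c u v = 1 := fun u v h => if_pos h
  have hc0 : ∀ u v, ¬ T.Adj u v → c u v = 0 := fun u v h => if_neg h
  have hid := ground_state_s12 c (fun u v => by simp [hc, T.adj_comm]) A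
    (fun u v huv => by
      by_cases h : T.Adj u v
      · rw [hc1 u v h, hA1 u v h]
      · rw [hc0 u v h, hA0 u v huv h, neg_zero])
    (fun u => hc0 u u (T.irrefl)) f hf0 lam hf
  set Sn : Set (Sym2 (Fin N)) := {e | e ∈ T.edgeSet ∧ P e} with hSn
  set Sp : Set (Sym2 (Fin N)) := {e | e ∈ T.edgeSet ∧ ¬ P e} with hSp
  have hcard : Sn.ncard + Sp.ncard + 1 = N := by
    have h1 : Sn ∪ Sp = T.edgeSet := by
      ext e; simp only [hSn, hSp, Set.mem_union, Set.mem_ofPred_eq]; tauto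
    have h2 : Disjoint Sn Sp := by
      rw [Set.disjoint_left]; rintro e ⟨_, h⟩ ⟨_, h'⟩; exact h' h
    rw [← Set.ncard_union_eq h2 (Set.toFinite _) (Set.toFinite _), h1]
    have := hT.card_edgeFinset
    rw [Fintype.card_fin] at this
    rw [← SimpleGraph.coe_edgeFinset, Set.ncard_coe_finset]
    exact this
  have hyne : ∀ x : Fin N → ℝ, x ≠ 0 → (fun u => x u / f u) ≠ 0 := by
    intro x hx h
    apply hx
    funext u
    have := congrFun h u
    simp only [Pi.zero_apply, div_eq_zero_iff, hf0 u, or_false] at this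
    simpa using this
  have hlow : ∀ i, i < m → sE A i < lam := by
    intro i hi
    obtain ⟨L, hL⟩ := exists_edge_map f r Sp
    obtain ⟨x, hx0, hLx, hx⟩ := minmax_lo A hH L i (by
      rw [Fintype.card_option, ← Nat.card_eq_fintype_card, Nat.card_coe_set_eq]; omega)
    obtain ⟨hr, hxe⟩ := hL x hLx
    have hs := strict_form T hT.connected c hc1 hc0 (fun u v => - (f u * f v))
      (fun u => x u / f u) r (by simp [hr]) (hyne x hx0) (by
        intro u v huv
        by_cases h : f u * f v < 0
        · right; linarith
        · left; exact hxe u v ⟨huv, by rwa [hPiff]⟩)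
    have e := hid x
    simp only [mul_neg, neg_mul, Finset.sum_neg_distrib] at hs
    have hp := dot_pos hx0
    by_contra hcon
    push Not at hcon
    nlinarith
  have hhigh : ∀ i, m < i → i < N → lam < sE A i := by
    intro i hi hiN
    obtain ⟨L, hL⟩ := exists_edge_map f r Sn
    obtain ⟨x, hx0, hLx, hx⟩ := minmax_hi A hH L i hiN (by
      rw [Fintype.card_option, ← Nat.card_eq_fintype_card, Nat.card_coe_set_eq]; omega)
    obtain ⟨hr, hxe⟩ := hL x hLx
    have hs := strict_form T hT.connected c hc1 hc0 (fun u v => (f u * f v))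
      (fun u => x u / f u) r (by simp [hr]) (hyne x hx0) (by
        intro u v huv
        by_cases h : f u * f v < 0
        · left; exact hxe u v ⟨huv, by rwa [hPiff]⟩
        · right
          exact lt_of_le_of_ne (not_lt.1 h) (mul_ne_zero (hf0 u) (hf0 v)).symm)
    have e := hid x
    have hp := dot_pos hx0
    by_contra hcon
    push Not at hcon
    nlinarith
  obtain ⟨v, h1, h2, h3, h4, h5⟩ := exists_eig_basis A hH
  have hfne : f ≠ 0 := fun h => hf0 r (by rw [h]; rfl)
  obtain ⟨i, hi⟩ : ∃ i, v i ⬝ᵥ f ≠ 0 := by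
    by_contra hcon
    push Not at hcon
    have := dot_pos hfne
    rw [h3] at this
    simp [hcon] at this
  have hiE : sE A i = lam := by
    have hT' : Aᵀ = A := by rw [← Matrix.conjTranspose_eq_transpose_of_trivial]; exact hH
    have e : v i ⬝ᵥ (A *ᵥ f) = (A *ᵥ v i) ⬝ᵥ f := by
      rw [dotProduct_mulVec, ← mulVec_transpose, hT']
    rw [hf, h2, dotProduct_smul, smul_dotProduct, smul_eq_mul, smul_eq_mul] at e
    exact (mul_right_cancel₀ hi e).symm
  have him : (i : ℕ) = m := by
    rcases lt_trichotomy (i : ℕ) m with h | h | h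
    · exact absurd hiE (hlow i h).ne
    · exact h
    · exact absurd hiE (hhigh i h i.2).ne'
  exact ⟨him ▸ i.2, him ▸ hiE, hlow, hhigh⟩

lemma schrodOp_symm {N : ℕ} (G : SimpleGraph (Fin N)) [DecidableRel G.Adj]
    (q : Fin N → ℝ) (a b : Fin N) : schrodOp G q a b = schrodOp G q b a := by
  by_cases h : a = b
  · rw [h]
  · simp [schrodOp, h, Ne.symm h, G.adj_comm]

lemma schrodOp_off {N : ℕ} (G : SimpleGraph (Fin N)) [DecidableRel G.Adj]
    (q : Fin N → ℝ) (a b : Fin N) (h : a ≠ b) :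
    schrodOp G q a b = if G.Adj a b then -1 else 0 := by
  by_cases h' : G.Adj a b <;> simp [schrodOp, h, h']

/-- The local modification attached to one edge. -/
noncomputable def edgeMod {N : ℕ} (u v : Fin N) (t : ℝ) : Matrix (Fin N) (Fin N) ℝ :=
  Matrix.of (fun a b =>
    if a = u ∧ b = u then t
    else if a = v ∧ b = v then t⁻¹
    else if (a = u ∧ b = v) ∨ (a = v ∧ b = u) then -1
    else 0)

lemma schrodCut_eq {N β : ℕ} (G : SimpleGraph (Fin N)) [DecidableRel G.Adj]
    (q : Fin N → ℝ) (uE vE : Fin β → Fin N) (γ : Fin β → ℝ) :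
    schrodCut G q uE vE γ = schrodOp G q - ∑ j, edgeMod (uE j) (vE j) (γ j) := rfl

lemma edgeMod_symm {N : ℕ} (u v : Fin N) (t : ℝ) (a b : Fin N) :
    edgeMod u v t a b = edgeMod u v t b a := by
  simp only [edgeMod, of_apply]
  grind

lemma edgeMod_off {N : ℕ} (u v : Fin N) (t : ℝ) (a b : Fin N) (h : a ≠ b) :
    edgeMod u v t a b = if s(a, b) = s(u, v) then -1 else 0 := by
  simp only [edgeMod, of_apply, Sym2.eq_iff]
  grind

lemma edgeMod_eq {N : ℕ} (u v : Fin N) (huv : u ≠ v) (t : ℝ) :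
    edgeMod u v t = Matrix.single u u t + Matrix.single v v t⁻¹ - Matrix.single u v 1
      - Matrix.single v u 1 := by
  ext a b
  simp only [edgeMod, of_apply, Matrix.sub_apply, Matrix.add_apply, Matrix.single_apply]
  by_cases h1 : a = u <;> by_cases h2 : a = v <;> by_cases h3 : b = u <;> by_cases h4 : b = v <;>
    simp_all [eq_comm]

lemma edgeMod_mulVec {N : ℕ} (u v : Fin N) (huv : u ≠ v) (f : Fin N → ℝ) (hu : f u ≠ 0)
    (hv : f v ≠ 0) : edgeMod u v (f v / f u) *ᵥ f = 0 := by
  rw [edgeMod_eq u v huv]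
  simp only [sub_mulVec, add_mulVec, Matrix.single_mulVec]
  ext a
  by_cases h1 : a = u <;> by_cases h2 : a = v
  · exact absurd (h1.symm.trans h2) huv
  · subst h1; simp [huv]; field_simp; simp
  · subst h2; simp [h1]; field_simp; simp
  · simp [h1, h2]

lemma edgeMod_quad {N : ℕ} (u v : Fin N) (huv : u ≠ v) (f : Fin N → ℝ) (t : ℝ) :
    f ⬝ᵥ (edgeMod u v t *ᵥ f) = t * f u ^ 2 + t⁻¹ * f v ^ 2 - 2 * (f u * f v) := by
  rw [edgeMod_eq u v huv]
  simp only [sub_mulVec, add_mulVec, Matrix.single_mulVec, dotProduct_sub, dotProduct_add]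
  have hs : ∀ (u : Fin N) (a : ℝ), Function.update (0 : Fin N → ℝ) u a = Pi.single u a :=
    fun _ _ => rfl
  simp only [hs, dotProduct_single]
  ring

lemma schrodCut_herm {N β : ℕ} (G : SimpleGraph (Fin N)) [DecidableRel G.Adj]
    (q : Fin N → ℝ) (uE vE : Fin β → Fin N) (γ : Fin β → ℝ) :
    (schrodCut G q uE vE γ).IsHermitian := by
  refine Matrix.IsHermitian.ext fun a b => ?_
  rw [schrodCut_eq, star_trivial, Matrix.sub_apply, Matrix.sub_apply, Matrix.sum_apply,
    Matrix.sum_apply, schrodOp_symm]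
  congr 1
  exact Finset.sum_congr rfl fun j _ => edgeMod_symm _ _ _ _ _

lemma schrodCut_diff {N β : ℕ} (G : SimpleGraph (Fin N)) [DecidableRel G.Adj]
    (q : Fin N → ℝ) (uE vE : Fin β → Fin N) (γ : Fin β → ℝ) (hγ : ∀ j, γ j ≠ 0) (a b : Fin N) :
    DifferentiableAt ℝ (fun γ => schrodCut G q uE vE γ a b) γ := by
  simp only [schrodCut_eq, Matrix.sub_apply, Matrix.sum_apply]
  refine (differentiableAt_const _).sub (DifferentiableAt.fun_sum fun j _ => ?_)
  have hj : DifferentiableAt ℝ (fun γ : Fin β → ℝ => γ j) γ := differentiableAt_apply j γ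
  simp only [edgeMod, of_apply]
  split_ifs
  · exact hj
  · exact hj.inv (hγ j)
  · exact differentiableAt_const _
  · exact differentiableAt_const _

/-- the point `γ̃ = (f_{v_j}/f_{u_j})_j` is a critical point of the function
`γ ↦ λ_{φ-p+1}(H(Γ^cut_γ))` (which is differentiable in a neighborhood of `γ̃`). -/
theorem cut_eigenvalue_critical_point {N β : ℕ} (G : SimpleGraph (Fin N))
    [DecidableRel G.Adj] (hconn : G.Connected) (q : Fin N → ℝ)
    (uE vE : Fin β → Fin N)
    (hadj : ∀ j, G.Adj (uE j) (vE j))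
    (hdistinct : ∀ i j, s(uE i, vE i) = s(uE j, vE j) → i = j)
    (htree : (G.deleteEdges {e | ∃ j, e = s(uE j, vE j)}).IsTree)
    (hβ : β + N = G.edgeFinset.card + 1)
    (n : ℕ) (hn1 : 1 ≤ n) (hn2 : n ≤ N)
    (f : Fin N → ℝ)
    (heig : (schrodOp G q).mulVec f = sE (schrodOp G q) (n - 1) • f)
    (hsimple : Module.finrank ℝ
      (Module.End.eigenspace (Matrix.toLin' (schrodOp G q)) (sE (schrodOp G q) (n - 1))) = 1)
    (hf0 : ∀ v, f v ≠ 0)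
    (φ p : ℕ) (hφ : φ = signChanges G f)
    (hp : p = {j : Fin β | f (vE j) / f (uE j) < 0}.ncard)
    (lamCut : (Fin β → ℝ) → ℝ)
    (hlamCut : lamCut = fun γ => sE (schrodCut G q uE vE γ) (φ - p)) :
    (∀ᶠ γ in nhds (fun j => f (vE j) / f (uE j)), DifferentiableAt ℝ lamCut γ) ∧
    fderiv ℝ lamCut (fun j => f (vE j) / f (uE j)) = 0 := by
  classical
  set lam := sE (schrodOp G q) (n - 1) with hlam
  set γt : Fin β → ℝ := fun j => f (vE j) / f (uE j) with hγt
  set A : (Fin β → ℝ) → Matrix (Fin N) (Fin N) ℝ := fun γ => schrodCut G q uE vE γ with hAdef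
  set T := G.deleteEdges {e | ∃ j, e = s(uE j, vE j)} with hTdef
  have hTadj : ∀ u v, T.Adj u v ↔ G.Adj u v ∧ ¬ ∃ j, s(u, v) = s(uE j, vE j) := by
    intro u v
    rw [hTdef, SimpleGraph.deleteEdges_adj]; rfl
  have hne : ∀ j, uE j ≠ vE j := fun j => (hadj j).ne
  have hH : ∀ γ, (A γ).IsHermitian := fun γ => schrodCut_herm G q uE vE γ
  have hγ0 : ∀ j, γt j ≠ 0 := fun j => div_ne_zero (hf0 _) (hf0 _)
  have hAf : A γt *ᵥ f = lam • f := by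
    simp only [hAdef, schrodCut_eq, sub_mulVec, Matrix.sum_mulVec]
    rw [heig, Finset.sum_eq_zero fun j _ => edgeMod_mulVec (uE j) (vE j) (hne j) f (hf0 _) (hf0 _),
      sub_zero]
  have hoff : ∀ u v, u ≠ v → A γt u v =
      (if G.Adj u v then -1 else 0) - ∑ j, if s(u, v) = s(uE j, vE j) then (-1 : ℝ) else 0 := by
    intro u v huv
    simp only [hAdef, schrodCut_eq, Matrix.sub_apply, Matrix.sum_apply]
    rw [schrodOp_off G q u v huv,
      Finset.sum_congr rfl fun j _ => edgeMod_off (uE j) (vE j) (γt j) u v huv]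
  have hA1 : ∀ u v, T.Adj u v → A γt u v = -1 := by
    intro u v h
    obtain ⟨h1, h2⟩ := (hTadj u v).1 h
    push Not at h2
    rw [hoff u v h.ne, if_pos h1, Finset.sum_eq_zero fun j _ => if_neg (h2 j), sub_zero]
  have hA0 : ∀ u v, u ≠ v → ¬ T.Adj u v → A γt u v = 0 := by
    intro u v huv h
    rw [hoff u v huv]
    by_cases hex : ∃ j, s(u, v) = s(uE j, vE j)
    · obtain ⟨j, hj⟩ := hex
      have hG : G.Adj u v := by
        rw [← SimpleGraph.mem_edgeSet, hj, SimpleGraph.mem_edgeSet]; exact hadj j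
      rw [if_pos hG, Finset.sum_eq_single j, if_pos hj, sub_self]
      · intro i _ hij
        exact if_neg fun h' => hij (hdistinct _ _ (h'.symm.trans hj))
      · simp
    · have hG : ¬ G.Adj u v := fun hG => h ((hTadj u v).2 ⟨hG, hex⟩)
      push Not at hex
      rw [if_neg hG, Finset.sum_eq_zero fun j _ => if_neg (hex j), sub_zero]
  have hm : φ - p = {e : Sym2 (Fin N) | e ∈ T.edgeSet ∧
      ∀ u v : Fin N, e = s(u, v) → f u * f v < 0}.ncard := by
    set P : Sym2 (Fin N) → Prop := fun e => ∀ u v : Fin N, e = s(u, v) → f u * f v < 0 with hP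
    have hPiff : ∀ u v, P s(u, v) ↔ f u * f v < 0 := by
      intro u v
      refine ⟨fun h => h u v rfl, fun h a b hab => ?_⟩
      rcases Sym2.eq_iff.1 hab with ⟨rfl, rfl⟩ | ⟨rfl, rfl⟩
      · exact h
      · rw [mul_comm]; exact h
    set J : Set (Fin β) := {j : Fin β | f (vE j) / f (uE j) < 0} with hJ
    have hsign : ∀ j, j ∈ J ↔ P s(uE j, vE j) := by
      intro j
      rw [hPiff]
      change f (vE j) / f (uE j) < 0 ↔ _
      rw [div_neg_iff, mul_neg_iff]
      tauto
    have himg : ((fun j => s(uE j, vE j)) '' J).ncard = p := by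
      rw [hp]
      exact Set.ncard_image_of_injective _ fun i j h => hdistinct i j h
    have hsub : (fun j => s(uE j, vE j)) '' J ⊆ {e | e ∈ G.edgeSet ∧ P e} := by
      rintro e ⟨j, hj, rfl⟩
      exact ⟨hadj j, (hsign j).1 hj⟩
    have hset : {e | e ∈ T.edgeSet ∧ P e} =
        {e | e ∈ G.edgeSet ∧ P e} \ ((fun j => s(uE j, vE j)) '' J) := by
      ext e
      induction e using Sym2.ind with
      | _ u v =>
      simp only [Set.mem_ofPred_eq, Set.mem_sdiff, SimpleGraph.mem_edgeSet, hTadj, Set.mem_image,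
        not_exists, not_and]
      constructor
      · rintro ⟨⟨h1, h2⟩, h3⟩
        exact ⟨⟨h1, h3⟩, fun j _ h => h2 j h.symm⟩
      · rintro ⟨⟨h1, h3⟩, h2⟩
        exact ⟨⟨h1, fun j h => h2 j ((hsign j).2 (h ▸ h3)) h.symm⟩, h3⟩
    rw [hset, Set.ncard_sdiff hsub, himg, hφ]
    rfl
  obtain ⟨hkN, hke, hlo, hhi⟩ := fiedler T htree (A γt) (hH γt) hA1 hA0 f hf0 lam hAf (φ - p) hm
  set k := φ - p with hk
  have hdiff : ∀ γ : Fin β → ℝ, (∀ j, γ j ≠ 0) →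
      DifferentiableAt ℝ (fun γ => (fun i j => A γ i j : Fin N → Fin N → ℝ)) γ := by
    intro γ hγ
    rw [differentiableAt_pi]; intro a
    rw [differentiableAt_pi]; intro b
    exact schrodCut_diff G q uE vE γ hγ a b
  have hlamCut' : lamCut = fun γ => sE (A γ) k := hlamCut
  constructor
  · have hcont := fun i hi => sE_continuousAt A hH γt (hdiff γt hγ0).continuousAt i hi
    have e1 : ∀ᶠ γ in nhds γt, ∀ j, γ j ≠ 0 := by
      rw [Filter.eventually_all]
      intro j
      exact (continuousAt_apply j γt).eventually_ne (hγ0 j)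
    have e2 : ∀ᶠ γ in nhds γt, ∀ i : Fin N, ((i : ℕ) < k → sE (A γ) i < sE (A γ) k) ∧
        (k < i → sE (A γ) k < sE (A γ) i) := by
      rw [Filter.eventually_all]
      intro i
      refine Filter.Eventually.and ?_ ?_
      · by_cases h : (i : ℕ) < k
        · have := (hcont i i.2).eventually_lt (hcont k hkN) (by rw [hke]; exact hlo i h)
          exact this.mono fun _ h' _ => h'
        · exact Filter.Eventually.of_forall fun _ h' => absurd h' h
      · by_cases h : k < (i : ℕ)
        · have := (hcont k hkN).eventually_lt (hcont i i.2) (by rw [hke]; exact hhi i h i.2)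
          exact this.mono fun _ h' _ => h'
        · exact Filter.Eventually.of_forall fun _ h' => absurd h' h
    filter_upwards [e1, e2] with γ h1 h2
    obtain ⟨w, -, -, hw⟩ := sE_hasFDerivAt A hH γ (hdiff γ h1) k hkN
      (fun i hi => (h2 ⟨i, by omega⟩).1 hi) (fun i hi hi' => (h2 ⟨i, hi'⟩).2 hi)
    have hq : DifferentiableAt ℝ (fun γ => w ⬝ᵥ (A γ *ᵥ w)) γ := by
      simp only [dotProduct, mulVec]
      refine DifferentiableAt.fun_sum fun a _ => (differentiableAt_const _).mul
        (DifferentiableAt.fun_sum fun b _ => ?_)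
      exact (schrodCut_diff G q uE vE γ h1 a b).mul (differentiableAt_const _)
    have := hw.differentiableAt.add hq
    have heq : ((fun x => sE (A x) k - w ⬝ᵥ (A x *ᵥ w)) + fun γ => w ⬝ᵥ (A γ *ᵥ w)) =
        fun γ => sE (A γ) k := by
      funext x
      simp
    rw [heq] at this
    rw [hlamCut']
    exact this
  · obtain ⟨w, hww, hwf, hw⟩ := sE_hasFDerivAt A hH γt (hdiff γt hγ0) k hkN
      (fun i hi => by rw [hke]; exact hlo i hi) (fun i hi hi' => by rw [hke]; exact hhi i hi hi')
    obtain ⟨c, hc⟩ := hwf f (by rw [hke]; exact hAf)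
    have hc0 : c ≠ 0 := by
      intro h
      apply hf0 ⟨k, hkN⟩
      rw [hc, h]; simp
    have hquad : ∀ γ, w ⬝ᵥ (A γ *ᵥ w) = (c ^ 2)⁻¹ * (f ⬝ᵥ (schrodOp G q *ᵥ f) -
        ∑ j, (γ j * f (uE j) ^ 2 + (γ j)⁻¹ * f (vE j) ^ 2 - 2 * (f (uE j) * f (vE j)))) := by
      intro γ
      have e1 : f ⬝ᵥ (A γ *ᵥ f) = c ^ 2 * (w ⬝ᵥ (A γ *ᵥ w)) := by
        rw [hc, mulVec_smul, dotProduct_smul, smul_dotProduct, smul_eq_mul, smul_eq_mul]; ring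
      have e2 : f ⬝ᵥ (A γ *ᵥ f) = f ⬝ᵥ (schrodOp G q *ᵥ f) -
          ∑ j, (γ j * f (uE j) ^ 2 + (γ j)⁻¹ * f (vE j) ^ 2 - 2 * (f (uE j) * f (vE j))) := by
        simp only [hAdef, schrodCut_eq, sub_mulVec, Matrix.sum_mulVec, dotProduct_sub,
          dotProduct_sum]
        rw [Finset.sum_congr rfl fun j _ => edgeMod_quad (uE j) (vE j) (hne j) f (γ j)]
      rw [← e2, e1]
      field_simp
    have hterm : ∀ j, HasFDerivAt (fun γ : Fin β → ℝ => γ j * f (uE j) ^ 2 +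
        (γ j)⁻¹ * f (vE j) ^ 2 - 2 * (f (uE j) * f (vE j))) (0 : (Fin β → ℝ) →L[ℝ] ℝ) γt := by
      intro j
      have h1 : HasDerivAt (fun t : ℝ => t * f (uE j) ^ 2 + t⁻¹ * f (vE j) ^ 2 -
          2 * (f (uE j) * f (vE j))) 0 (γt j) := by
        have := (((hasDerivAt_id (γt j)).mul_const (f (uE j) ^ 2)).add
          ((hasDerivAt_inv (hγ0 j)).mul_const (f (vE j) ^ 2))).sub_const
            (2 * (f (uE j) * f (vE j)))
        refine this.congr_deriv ?_
        simp only [hγt]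
        have := hf0 (uE j)
        have := hf0 (vE j)
        field_simp
        ring
      have h2 : HasFDerivAt (fun γ : Fin β → ℝ => γ j)
          (ContinuousLinearMap.proj j : (Fin β → ℝ) →L[ℝ] ℝ) γt := hasFDerivAt_apply j γt
      have h3 := h1.comp_hasFDerivAt γt h2
      rw [zero_smul] at h3
      exact h3
    have hq : HasFDerivAt (fun γ => w ⬝ᵥ (A γ *ᵥ w)) (0 : (Fin β → ℝ) →L[ℝ] ℝ) γt := by
      simp only [hquad]
      have h1 := HasFDerivAt.fun_sum (u := Finset.univ) fun j _ => hterm j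
      have h2 := (h1.const_sub (f ⬝ᵥ (schrodOp G q *ᵥ f))).const_mul ((c ^ 2)⁻¹)
      simpa using h2
    have := hw.add hq
    rw [add_zero] at this
    have h := this.fderiv
    rw [hlamCut', ← h]
    congr 1
    funext x
    simp
end
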